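/- arXiv:1306.6899 — 6 statements merged into one kernel-verified Lean document; each statement's English description precedes it below -/
import Mathlib

section
/- Let C > 0 and a < b be real numbers, and let μ be the Borel measure on ℝ with density x ↦ C·1_{[a,b]}(x) with respect to Lebesgue measure. Let A ⊆ [a,b] be a nonempty compact set. Then the function t ↦ μ(A + t·[-1,1]) is concave on [0,∞). -/
open MeasureTheory Set Pointwise

/-!
For an interval `I` containing `A`, the volume of the shell `{x ∈ I | t < d(x, A) ≤ t + δ}`
decreases in `t`. Indeed, every point off `closure A` has a nearest point of `closure A` on its left
or on its right; moving the points of the first kind to the left by `s` and the others to the right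
by `s` maps the shell at distance `t + s` injectively into the shell at distance `t`, piecewise by
translations, and keeps every point between its old position and `A`, hence in `I`. A monotone
function whose increments over steps of a fixed length decrease is concave, so the volume of the
closed thickenings of `A` is concave. Finally, `A + t • [-1, 1]` contains the closed `s`-thickenings
for `s < t` and is contained in the closed `t`-thickening, and a function squeezed in this way under
a concave function is concave.
-/

open Filter Metric Topology Bornology

section Concavity

variable {S : Set ℝ} {f g : ℝ → ℝ}

/-- The increments of `f` over subintervals of `S` of a fixed length decrease as the subinterval
moves to the right. For monotone `f` and convex `S` this amounts to concavity. -/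
def HasAntitoneIncrementsOn (f : ℝ → ℝ) (S : Set ℝ) : Prop :=
  ∀ ⦃x y δ : ℝ⦄, x ∈ S → y + δ ∈ S → x ≤ y → 0 ≤ δ → f (y + δ) - f y ≤ f (x + δ) - f x

theorem sub_le_natCast_mul_increment (hS : Convex ℝ S) (hf : HasAntitoneIncrementsOn f S)
    {y δ : ℝ} (hδ : 0 ≤ δ) (hy : y ∈ S) (n : ℕ) (hn : y + n * δ ∈ S) :
    f (y + n * δ) - f y ≤ n * (f (y + δ) - f y) := by
  induction n with
  | zero => simp
  | succ n ih =>
    have hsucc : y + (n + 1 : ℕ) * δ = y + n * δ + δ := by push_cast; ring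
    have hnδ : 0 ≤ n * δ := by positivity
    rw [hsucc] at hn ⊢
    have hmem : y + n * δ ∈ S := hS.ordConnected.out hy hn ⟨by linarith, by linarith⟩
    have hstep := hf hy hn (by linarith) hδ
    push_cast
    linarith [ih hmem]

theorem natCast_mul_increment_le_sub (hS : Convex ℝ S) (hf : HasAntitoneIncrementsOn f S)
    {y δ : ℝ} (hδ : 0 ≤ δ) (hyδ : y + δ ∈ S) (n : ℕ) (hn : y - n * δ ∈ S) :
    n * (f (y + δ) - f y) ≤ f y - f (y - n * δ) := by
  induction n with
  | zero => simp
  | succ n ih =>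
    have hsucc : y - n * δ = y - (n + 1 : ℕ) * δ + δ := by push_cast; ring
    have hnδ : 0 ≤ n * δ := by positivity
    have hmem : y - n * δ ∈ S := hS.ordConnected.out hn hyδ ⟨by linarith, by linarith⟩
    have hstep := hf hn hyδ (by linarith) hδ
    rw [← hsucc] at hstep
    push_cast at hstep ⊢
    linarith [ih hmem]

theorem floor_div_mul_sub_le_sub (hS : Convex ℝ S) (hmono : MonotoneOn f S)
    (hf : HasAntitoneIncrementsOn f S) {x y z : ℝ} (hx : x ∈ S) (hz : z ∈ S) (hxy : x ≤ y)
    (hyz : y < z) {n : ℕ} (hn : 0 < n) :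
    ⌊(y - x) / (z - y) * n⌋₊ / (n : ℝ) * (f z - f y) ≤ f y - f x := by
  have hy : y ∈ S := hS.ordConnected.out hx hz ⟨hxy, hyz.le⟩
  have hyz₀ : 0 < z - y := sub_pos.2 hyz
  have hxy₀ : 0 ≤ y - x := sub_nonneg.2 hxy
  have hn₀ : (0 : ℝ) < n := Nat.cast_pos.2 hn
  -- Cut `[y, z]` into `n` steps of equal length; `k` steps of this length fit into `[x, y]`.
  set δ := (z - y) / n with hδ
  set k := ⌊(y - x) / (z - y) * n⌋₊
  have hδ₀ : 0 < δ := div_pos hyz₀ hn₀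
  have hnδ : y + n * δ = z := by rw [hδ, mul_div_cancel₀ _ hn₀.ne', add_sub_cancel]
  have hkδ : k * δ ≤ y - x := calc
    k * δ ≤ (y - x) / (z - y) * n * δ := by
      gcongr
      exact Nat.floor_le (mul_nonneg (div_nonneg hxy₀ hyz₀.le) hn₀.le)
    _ = y - x := by rw [hδ]; field_simp
  have hδle : y + δ ≤ z := by
    rw [← hnδ]
    gcongr
    exact le_mul_of_one_le_left hδ₀.le (Nat.one_le_cast.2 hn)
  have hkδ₀ : 0 ≤ k * δ := by positivity
  have hyk : y - k * δ ∈ S := hS.ordConnected.out hx hy ⟨by linarith, by linarith⟩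
  have hyδ : y + δ ∈ S := hS.ordConnected.out hy hz ⟨by linarith, hδle⟩
  calc k / (n : ℝ) * (f z - f y)
      = k / (n : ℝ) * (f (y + n * δ) - f y) := by rw [hnδ]
    _ ≤ k / (n : ℝ) * (n * (f (y + δ) - f y)) := by
      gcongr
      exact sub_le_natCast_mul_increment hS hf hδ₀.le hy n (hnδ ▸ hz)
    _ = k * (f (y + δ) - f y) := by field_simp
    _ ≤ f y - f (y - k * δ) := natCast_mul_increment_le_sub hS hf hδ₀.le hyδ k hyk
    _ ≤ f y - f x := by gcongr; exact hmono hx hyk (by linarith)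

theorem concaveOn_of_monotoneOn_of_hasAntitoneIncrementsOn (hS : Convex ℝ S)
    (hmono : MonotoneOn f S) (hf : HasAntitoneIncrementsOn f S) : ConcaveOn ℝ S f := by
  refine concaveOn_of_slope_anti_adjacent hS fun {x y z} hx hz hxy hyz => ?_
  have hyz₀ : 0 < z - y := sub_pos.2 hyz
  have hratio : 0 ≤ (y - x) / (z - y) := div_nonneg (sub_pos.2 hxy).le hyz₀.le
  have hlim : Tendsto (fun n : ℕ => ⌊(y - x) / (z - y) * n⌋₊ / (n : ℝ) * (f z - f y)) atTop
      (𝓝 ((y - x) / (z - y) * (f z - f y))) :=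
    ((tendsto_nat_floor_mul_div_atTop hratio).comp tendsto_natCast_atTop_atTop).mul_const _
  have hle : (y - x) / (z - y) * (f z - f y) ≤ f y - f x :=
    le_of_tendsto hlim ((eventually_gt_atTop 0).mono fun _ =>
      floor_div_mul_sub_le_sub hS hmono hf hx hz hxy.le hyz)
  rwa [div_le_div_iff₀ hyz₀ (sub_pos.2 hxy), ← div_le_iff₀ hyz₀, mul_comm, ← div_mul_eq_mul_div]

theorem concaveOn_of_le_of_forall_lt_le (hf : ConcaveOn ℝ S f) (hgf : ∀ x ∈ S, g x ≤ f x)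
    (hfg : ∀ x ∈ S, ∀ y ∈ S, x < y → f x ≤ g y) : ConcaveOn ℝ S g := by
  refine concaveOn_of_slope_anti_adjacent hf.1 fun {x y z} hx hz hxy hyz => ?_
  have hIcc : Icc x z ⊆ S := hf.1.ordConnected.out hx hz
  have hy : y ∈ S := hIcc ⟨hxy.le, hyz.le⟩
  have hcont : ContinuousAt f y := hf.continuousOn_interior.continuousAt
    (isOpen_interior.mem_nhds (mem_interior.2 ⟨Ioo x z, Ioo_subset_Icc_self.trans hIcc, isOpen_Ioo,
      hxy, hyz⟩))
  have hgy : g y = f y := by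
    refine le_antisymm (hgf y hy) (le_of_tendsto (hcont.continuousWithinAt (s := Iio y)) ?_)
    filter_upwards [Ioo_mem_nhdsLT hxy] with w hw
    exact hfg w (hIcc ⟨hw.1.le, hw.2.le.trans hyz.le⟩) y hy hw.2
  calc (g z - g y) / (z - y) ≤ (f z - f y) / (z - y) := by
        rw [hgy]
        exact div_le_div_of_nonneg_right (sub_le_sub_right (hgf z hz) _) (sub_pos.2 hyz).le
    _ ≤ (f y - f x) / (y - x) := hf.slope_anti_adjacent hx hz hxy hyz
    _ ≤ (g y - g x) / (y - x) := by
      rw [hgy]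
      exact div_le_div_of_nonneg_right (sub_le_sub_left (hgf x hx) _) (sub_pos.2 hxy).le

end Concavity

section NearestAlong

variable {E : Type*} [SeminormedAddCommGroup E] [NormedSpace ℝ E] {A : Set E} {v x : E} {h : ℝ}

/-- For a unit vector `v`, the points having a nearest point of `closure A` in direction `-v`. On
the line, `v = 1` and `v = -1` give the points with a nearest point to their left and to their
right, respectively. -/
def nearestAlong (A : Set E) (v : E) : Set E :=
  {x | x - infDist x A • v ∈ closure A}

theorem isClosed_nearestAlong (A : Set E) (v : E) : IsClosed (nearestAlong A v) :=
  isClosed_closure.preimage (by fun_prop)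

theorem infDist_sub_smul_le_abs (hv : ‖v‖ = 1) (hx : x ∈ nearestAlong A v) (h : ℝ) :
    infDist (x - h • v) A ≤ |infDist x A - h| := calc
  infDist (x - h • v) A = infDist (x - h • v) (closure A) := infDist_closure.symm
  _ ≤ dist (x - h • v) (x - infDist x A • v) := infDist_le_dist_of_mem hx
  _ = |infDist x A - h| := by
    rw [dist_eq_norm, sub_sub_sub_cancel_left, ← sub_smul, norm_smul, hv, mul_one, Real.norm_eq_abs]

theorem infDist_sub_smul (hv : ‖v‖ = 1) (hx : x ∈ nearestAlong A v) (h₀ : 0 ≤ h)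
    (hle : h ≤ infDist x A) : infDist (x - h • v) A = infDist x A - h := by
  refine le_antisymm ?_ (sub_le_iff_le_add.2 ?_)
  · simpa only [abs_of_nonneg (sub_nonneg.2 hle)] using infDist_sub_smul_le_abs hv hx h
  · simpa [dist_eq_norm, norm_smul, hv, abs_of_nonneg h₀] using
      infDist_le_infDist_add_dist (s := A) (x := x) (y := x - h • v)

theorem sub_smul_mem_nearestAlong (hv : ‖v‖ = 1) (hx : x ∈ nearestAlong A v) (h₀ : 0 ≤ h)
    (hle : h ≤ infDist x A) : x - h • v ∈ nearestAlong A v := by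
  rwa [nearestAlong, mem_ofPred_eq, infDist_sub_smul hv hx h₀ hle, sub_smul,
    sub_sub_sub_cancel_right]

theorem infDist_add_smul_lt (hv : ‖v‖ = 1) (hx : x ∈ nearestAlong A (-v)) (h₀ : 0 < h)
    (hpos : 0 < infDist x A) : infDist (x + h • v) A < infDist x A + h := calc
  infDist (x + h • v) A ≤ |infDist x A - h| := by
    simpa using infDist_sub_smul_le_abs (norm_neg v ▸ hv) hx h
  _ < infDist x A + h := abs_lt.2 ⟨by linarith, by linarith⟩

end NearestAlong

section Shells

variable {A I B : Set ℝ} {h : ℝ}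

theorem nearestAlong_one_union_neg_one (hA : A.Nonempty) :
    nearestAlong A 1 ∪ nearestAlong A (-1) = univ := by
  refine eq_univ_of_forall fun x => ?_
  obtain ⟨p, hp, hxp⟩ := exists_mem_closure_infDist_eq_dist hA x
  rw [Real.dist_eq] at hxp
  rcases abs_choice (x - p) with habs | habs
  · left
    simpa [nearestAlong, hxp, habs] using hp
  · right
    simpa [nearestAlong, hxp, habs] using hp

theorem sub_smul_mem_of_ordConnected (hI : I.OrdConnected) (hAI : A ⊆ I) {v x : ℝ} (hv : ‖v‖ = 1)
    (hxI : x ∈ I) (hx : x ∈ nearestAlong A v) (h₀ : 0 ≤ h) (hlt : h < infDist x A) :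
    x - h • v ∈ I := by
  obtain ⟨q, hqA, hq⟩ := Metric.mem_closure_iff.1 hx _ (sub_pos.2 hlt)
  refine hI.uIcc_subset (hAI hqA) hxI ?_
  rw [Real.dist_eq, abs_lt] at hq
  rw [mem_uIcc]
  rcases eq_or_eq_neg_of_abs_eq hv with rfl | rfl
  · left
    constructor <;> simp only [smul_eq_mul, mul_one] at hq ⊢ <;> linarith
  · right
    constructor <;> simp only [smul_eq_mul, mul_neg, mul_one] at hq ⊢ <;> linarith

theorem mapsTo_sub_smul_nearestAlong (hI : I.OrdConnected) (hAI : A ⊆ I) (hB : B ⊆ Ioi 0)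
    (h₀ : 0 ≤ h) {v : ℝ} (hv : ‖v‖ = 1) :
    MapsTo (· - h • v) ({x | infDist x A - h ∈ B} ∩ I ∩ nearestAlong A v)
      ({x | infDist x A ∈ B} ∩ I ∩ nearestAlong A v) := by
  rintro x ⟨⟨hxB, hxI⟩, hx⟩
  have hlt : h < infDist x A := sub_pos.1 (hB hxB)
  refine ⟨⟨?_, sub_smul_mem_of_ordConnected hI hAI hv hxI hx h₀ hlt⟩,
    sub_smul_mem_nearestAlong hv hx h₀ hlt.le⟩
  rwa [mem_ofPred_eq, infDist_sub_smul hv hx h₀ hlt.le]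

theorem restrict_infDist_sub_mem_le (μ : Measure ℝ) [μ.IsAddRightInvariant]
    (hI : I.OrdConnected) (hAI : A ⊆ I) (hA : A.Nonempty) (hBm : MeasurableSet B)
    (hB : B ⊆ Ioi 0) (h₀ : 0 ≤ h) :
    μ.restrict I {x | infDist x A - h ∈ B} ≤ μ.restrict I {x | infDist x A ∈ B} := by
  rcases h₀.eq_or_lt with rfl | hpos
  · simp only [sub_zero, le_refl]
  rw [Measure.restrict_apply' hI.measurableSet, Measure.restrict_apply' hI.measurableSet]
  set P : ℝ → Set ℝ := fun v => {x | infDist x A - h ∈ B} ∩ I ∩ nearestAlong A v with hP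
  have hPm : MeasurableSet (P (-1)) :=
    ((measurableSet_preimage (by fun_prop) hBm).inter hI.measurableSet).inter
      (isClosed_nearestAlong A (-1)).measurableSet
  have hshift : ∀ v : ℝ, ‖v‖ = 1 →
      (· + h • v) ⁻¹' P v ⊆ {x | infDist x A ∈ B} ∩ I ∩ nearestAlong A v := fun v hv y hy => by
    simpa only [add_sub_cancel_right] using mapsTo_sub_smul_nearestAlong hI hAI hB h₀ hv hy
  have h₁ : ‖(1 : ℝ)‖ = 1 := norm_one
  have h₂ : ‖(-1 : ℝ)‖ = 1 := by rw [norm_neg, norm_one]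
  have hdisj : Disjoint ((· + h • (1 : ℝ)) ⁻¹' P 1) ((· + h • (-1 : ℝ)) ⁻¹' P (-1)) := by
    refine Set.disjoint_left.2 fun y hy hy' => ?_
    obtain ⟨⟨hyB, -⟩, hy_right⟩ := hshift (-1) h₂ hy'
    have hle : h ≤ infDist (y + h • (1 : ℝ)) A := (sub_pos.1 (hB hy.1.1)).le
    have heq := infDist_sub_smul h₁ hy.2 h₀ hle
    rw [add_sub_cancel_right] at heq
    linarith [infDist_add_smul_lt h₁ hy_right hpos (hB hyB)]
  calc μ ({x | infDist x A - h ∈ B} ∩ I)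
      = μ (P 1 ∪ P (-1)) := by
        rw [hP, ← inter_union_distrib_left, nearestAlong_one_union_neg_one hA, inter_univ]
    _ ≤ μ (P 1) + μ (P (-1)) := measure_union_le _ _
    _ = μ ((· + h • (1 : ℝ)) ⁻¹' P 1) + μ ((· + h • (-1 : ℝ)) ⁻¹' P (-1)) := by
      rw [measure_preimage_add_right, measure_preimage_add_right]
    _ = μ ((· + h • (1 : ℝ)) ⁻¹' P 1 ∪ (· + h • (-1 : ℝ)) ⁻¹' P (-1)) :=
      (measure_union hdisj (measurable_add_const _ hPm)).symm
    _ ≤ μ ({x | infDist x A ∈ B} ∩ I) := measure_mono <| union_subset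
      ((hshift 1 h₁).trans inter_subset_left) ((hshift (-1) h₂).trans inter_subset_left)

end Shells

section Thickenings

theorem mem_cthickening_iff_infDist_le {X : Type*} [PseudoMetricSpace X] {A : Set X}
    (hA : A.Nonempty) {t : ℝ} (ht : 0 ≤ t) {x : X} : x ∈ cthickening t A ↔ infDist x A ≤ t := by
  rw [mem_cthickening_iff, infDist, ENNReal.le_ofReal_iff_toReal_le (infEDist_ne_top hA) ht]

theorem measureReal_cthickening_sub {X : Type*} [PseudoMetricSpace X] [MeasurableSpace X]
    [OpensMeasurableSpace X] {μ : Measure X} {A : Set X} (hA : A.Nonempty) {s t : ℝ} (hs : 0 ≤ s)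
    (hst : s ≤ t) (hfin : μ (cthickening t A) ≠ ⊤) :
    μ.real (cthickening t A) - μ.real (cthickening s A) = μ.real {x | infDist x A ∈ Ioc s t} := by
  have hshell : {x | infDist x A ∈ Ioc s t} = cthickening t A \ cthickening s A := by
    ext x
    rw [Set.mem_sdiff, mem_cthickening_iff_infDist_le hA hs,
      mem_cthickening_iff_infDist_le hA (hs.trans hst), not_le, and_comm]
    rfl
  rw [hshell, measureReal_sdiff (cthickening_mono hst A) isClosed_cthickening.measurableSet hfin]

variable {A I : Set ℝ}

theorem hasAntitoneIncrementsOn_measureReal_restrict_cthickening (μ : Measure ℝ)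
    [μ.IsAddRightInvariant] [IsLocallyFiniteMeasure μ] (hI : I.OrdConnected)
    (hAI : A ⊆ I) (hA : A.Nonempty) (hAb : IsBounded A) :
    HasAntitoneIncrementsOn (fun t => (μ.restrict I).real (cthickening t A)) (Ici 0) := by
  intro s t δ (hs : 0 ≤ s) _ hst hδ
  have hfin : ∀ r, μ.restrict I (cthickening r A) ≠ ⊤ := fun r =>
    hAb.cthickening.measure_lt_top.ne
  have hshift : {x | infDist x A ∈ Ioc t (t + δ)} =
      {x | infDist x A - (t - s) ∈ Ioc s (s + δ)} := by
    ext x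
    simp only [mem_ofPred_eq, mem_Ioc]
    constructor <;> rintro ⟨_, _⟩ <;> constructor <;> linarith
  have hsub : {x | infDist x A ∈ Ioc s (s + δ)} ⊆ cthickening (s + δ) A := fun x hx =>
    (mem_cthickening_iff_infDist_le hA (add_nonneg hs hδ)).2 hx.2
  rw [measureReal_cthickening_sub hA (hs.trans hst) (le_add_of_nonneg_right hδ) (hfin _),
    measureReal_cthickening_sub hA hs (le_add_of_nonneg_right hδ) (hfin _), hshift]
  exact ENNReal.toReal_mono (measure_ne_top_of_subset hsub (hfin _))
    (restrict_infDist_sub_mem_le μ hI hAI hA measurableSet_Ioc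
      (fun _ hr => hs.trans_lt hr.1) (sub_nonneg.2 hst))

theorem concaveOn_measureReal_restrict_cthickening (μ : Measure ℝ)
    [μ.IsAddRightInvariant] [IsLocallyFiniteMeasure μ] (hI : I.OrdConnected) (hAI : A ⊆ I)
    (hA : A.Nonempty) (hAb : IsBounded A) :
    ConcaveOn ℝ (Ici 0) fun t => (μ.restrict I).real (cthickening t A) :=
  concaveOn_of_monotoneOn_of_hasAntitoneIncrementsOn (convex_Ici 0)
    (fun _ _ _ _ hst => measureReal_mono (cthickening_mono hst A) hAb.cthickening.measure_lt_top.ne)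
    (hasAntitoneIncrementsOn_measureReal_restrict_cthickening μ hI hAI hA hAb)

theorem add_smul_Icc_eq_add_closedBall (A : Set ℝ) {t : ℝ} (ht : 0 ≤ t) :
    A + t • Icc (-1 : ℝ) 1 = A + closedBall 0 t := by
  rw [← smul_unitClosedBall_of_nonneg ht, Real.closedBall_eq_Icc, zero_sub, zero_add]

theorem add_closedBall_subset_cthickening {E : Type*} [SeminormedAddCommGroup E] (A : Set E)
    (t : ℝ) : A + closedBall 0 t ⊆ cthickening t A := by
  rintro _ ⟨p, hp, y, hy, rfl⟩
  exact mem_cthickening_of_dist_le _ p t A hp (by simpa using hy)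

theorem cthickening_subset_add_closedBall {E : Type*} [SeminormedAddCommGroup E] (A : Set E)
    {s t : ℝ} (ht : 0 < t) (hst : s < t) : cthickening s A ⊆ A + closedBall 0 t := calc
  cthickening s A ⊆ thickening t A := cthickening_subset_thickening' ht hst A
  _ = A + ball 0 t := by rw [add_ball_zero]
  _ ⊆ A + closedBall 0 t := add_subset_add_left ball_subset_closedBall

end Thickenings

theorem withDensity_ofReal_ite_mem {α : Type*} [MeasurableSpace α] (μ : Measure α) {s : Set α}
    [DecidablePred (· ∈ s)] (hs : MeasurableSet s) (C : ℝ) :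
    (μ.withDensity fun x => ENNReal.ofReal (if x ∈ s then C else 0)) =
      (C.toNNReal • μ).restrict s := by
  have hdensity : (fun x => ENNReal.ofReal (if x ∈ s then C else 0)) =
      s.indicator fun _ => ENNReal.ofReal C := by
    ext x
    rw [apply_ite ENNReal.ofReal, ENNReal.ofReal_zero, indicator_apply]
  rw [hdensity, withDensity_indicator hs, withDensity_const, Measure.restrict_smul]
  rfl

theorem parallel_volume_concave_uniform_measure_general (μ : Measure ℝ) [μ.IsAddRightInvariant]
    [IsLocallyFiniteMeasure μ] {I A : Set ℝ} (hI : I.OrdConnected) (hAb : IsBounded A)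
    (hAI : A ⊆ I) :
    ConcaveOn ℝ (Ici (0 : ℝ)) fun t => (μ.restrict I (A + t • Icc (-1 : ℝ) 1)).toReal := by
  rcases A.eq_empty_or_nonempty with rfl | hA
  · simpa only [empty_add, measure_empty, ENNReal.toReal_zero] using
      concaveOn_const (0 : ℝ) (convex_Ici (0 : ℝ))
  have hfin : ∀ t, μ.restrict I (cthickening t A) ≠ ⊤ := fun _ =>
    hAb.cthickening.measure_lt_top.ne
  refine concaveOn_of_le_of_forall_lt_le
    (concaveOn_measureReal_restrict_cthickening μ hI hAI hA hAb) (fun t ht => ?_)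
    fun s hs t ht hst => ?_ <;> rw [add_smul_Icc_eq_add_closedBall A ht]
  · exact measureReal_mono (add_closedBall_subset_cthickening A t) (hfin t)
  · exact measureReal_mono (cthickening_subset_add_closedBall A (hs.trans_lt hst) hst)
      (measure_ne_top_of_subset (add_closedBall_subset_cthickening A t) (hfin t))

/-- For the model 1-concave measure `C·1_{[a,b]} dx` and a compact A ⊆ [a,b],
the parallel μ-volume is concave on [0,∞). -/
theorem parallel_volume_concave_uniform_measure
    (C : ℝ) (hC : 0 < C) (a b : ℝ) (hab : a < b)
    (μ : Measure ℝ)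
    (hμ : μ = volume.withDensity fun x =>
      ENNReal.ofReal (if x ∈ Icc a b then C else 0))
    (A : Set ℝ) (hA : IsCompact A) (hAne : A.Nonempty) (hAsub : A ⊆ Icc a b) :
    ConcaveOn ℝ (Ici (0 : ℝ)) (fun t => (μ (A + t • Icc (-1 : ℝ) 1)).toReal) := by
  rw [hμ, withDensity_ofReal_ite_mem volume measurableSet_Icc]
  exact parallel_volume_concave_uniform_measure_general _ ordConnected_Icc hA.isBounded hAsub
end

section
/- Let n ≥ 2, work in Euclidean space ℝⁿ with Lebesgue measure |·|, let B₂ⁿ be the closed Euclidean unit ball, let e₁ be the first standard basis vector, and let A = B₂ⁿ ∪ {2e₁}. Then the function t ↦ |A + t·B₂ⁿ|^{1/n} is not concave on [0,∞): there exist t₁, t₂ ≥ 0 and λ ∈ [0,1] such that |A + ((1-λ)t₁ + λt₂)·B₂ⁿ|^{1/n} < (1-λ)·|A + t₁·B₂ⁿ|^{1/n} + λ·|A + t₂·B₂ⁿ|^{1/n}. -/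
open MeasureTheory Set Pointwise

/-!
While the parallel sets of two disjoint balls of radii `r ≠ s` stay disjoint, the volume at
distance `t` is `ω ((r + t) ^ n + (s + t) ^ n)`, where `ω` is the volume of the unit ball. Its
`n`-th root is, up to a constant factor, the `ℓⁿ` norm of the point `(r, s) + t (1, 1)`. For
`n ≥ 2` the `ℓⁿ` norm is strictly convex, so it is strictly convex along this line, which misses
the origin because `r ≠ s`. Hence the root of the volume is not concave. A point is a ball of
radius `0`, so `r = 1` and `s = 0` in the counterexample.
-/

section NormedSpace

variable {E : Type*} [NormedAddCommGroup E] [NormedSpace ℝ E]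

theorem strictConvexOn_norm_rpow [StrictConvexSpace ℝ E] {p : ℝ} (hp : 1 < p) :
    StrictConvexOn ℝ univ fun x : E ↦ ‖x‖ ^ p := by
  refine ⟨convex_univ, fun x _ y _ hxy a b ha hb hab ↦ ?_⟩
  have hp₀ : 0 < p := one_pos.trans hp
  by_cases hnorm : ‖x‖ = ‖y‖
  · calc ‖a • x + b • y‖ ^ p < ‖y‖ ^ p :=
          Real.rpow_lt_rpow (norm_nonneg _)
            (norm_combo_lt_of_ne hnorm.le le_rfl hxy ha hb hab) hp₀
      _ = a • ‖x‖ ^ p + b • ‖y‖ ^ p := by rw [hnorm, Convex.combo_self hab]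
  · calc ‖a • x + b • y‖ ^ p ≤ (a • ‖x‖ + b • ‖y‖) ^ p :=
          Real.rpow_le_rpow (norm_nonneg _)
            (convexOn_univ_norm.2 (mem_univ x) (mem_univ y) ha.le hb.le hab) hp₀.le
      _ < a • ‖x‖ ^ p + b • ‖y‖ ^ p :=
          (strictConvexOn_rpow hp).2 (norm_nonneg x) (norm_nonneg y) hnorm ha hb hab

theorem strictConvexOn_norm_add_smul [StrictConvexSpace ℝ E] {v w : E}
    (hvw : LinearIndependent ℝ ![v, w]) : StrictConvexOn ℝ univ fun t : ℝ ↦ ‖v + t • w‖ := by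
  refine ⟨convex_univ, fun t _ u _ htu a b ha hb hab ↦ ?_⟩
  have hindep : LinearIndependent ℝ ![a • (v + t • w), b • (v + u • w)] := by
    rw [LinearIndependent.pair_smul_smul_iff ha.ne'.isUnit hb.ne'.isUnit]
    simpa using (LinearIndependent.pair_add_smul_add_smul_iff 1 t 1 u).2
      ⟨hvw, by simpa using htu.symm⟩
  have hray : ¬SameRay ℝ (a • (v + t • w)) (b • (v + u • w)) := fun h ↦
    sameRay_or_sameRay_neg_iff_not_linearIndependent.1 (.inl h) hindep
  calc ‖v + (a • t + b • u) • w‖ = ‖a • (v + t • w) + b • (v + u • w)‖ := by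
        nth_rw 1 [← Convex.combo_self hab v]
        congr 1
        module
    _ < ‖a • (v + t • w)‖ + ‖b • (v + u • w)‖ := norm_add_lt_of_not_sameRay hray
    _ = a • ‖v + t • w‖ + b • ‖v + u • w‖ := by
        rw [norm_smul_of_nonneg ha.le, norm_smul_of_nonneg hb.le, smul_eq_mul, smul_eq_mul]

end NormedSpace

theorem strictConvexSpace_piLp {ι : Type*} [Fintype ι] {E : ι → Type*}
    [∀ i, NormedAddCommGroup (E i)] [∀ i, NormedSpace ℝ (E i)] [∀ i, StrictConvexSpace ℝ (E i)]
    {p : ENNReal} [Fact (1 ≤ p)] (hp₁ : p ≠ 1) (hp : p ≠ ⊤) : StrictConvexSpace ℝ (PiLp p E) := by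
  have hp_real : 1 < p.toReal := by
    simpa using (ENNReal.toReal_lt_toReal ENNReal.one_ne_top hp).2
      (lt_of_le_of_ne Fact.out hp₁.symm)
  have hp₀ : 0 < p.toReal := one_pos.trans hp_real
  have sum_eq_one {z : PiLp p E} (hz : ‖z‖ = 1) : ∑ i, ‖z i‖ ^ p.toReal = 1 := by
    rwa [PiLp.norm_eq_sum hp₀, one_div, Real.rpow_inv_eq (by positivity) zero_le_one hp₀.ne',
      Real.one_rpow] at hz
  refine .of_norm_combo_lt_one fun x y hx hy hxy ↦ ⟨1 / 2, 1 / 2, add_halves 1, ?_⟩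
  obtain ⟨j, hj⟩ : ∃ j, x j ≠ y j := by
    by_contra! h
    exact hxy (PiLp.ext h)
  rw [PiLp.norm_eq_sum hp₀]
  refine Real.rpow_lt_one (by positivity) ?_ (by positivity)
  calc ∑ i, ‖((1 / 2 : ℝ) • x + (1 / 2 : ℝ) • y) i‖ ^ p.toReal
      < ∑ i, ((1 / 2 : ℝ) • ‖x i‖ ^ p.toReal + (1 / 2 : ℝ) • ‖y i‖ ^ p.toReal) :=
        Finset.sum_lt_sum
          (fun i _ ↦ (strictConvexOn_norm_rpow hp_real).convexOn.2 (mem_univ (x i))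
            (mem_univ (y i)) one_half_pos.le one_half_pos.le (add_halves 1))
          ⟨j, Finset.mem_univ j, (strictConvexOn_norm_rpow hp_real).2 (mem_univ (x j))
            (mem_univ (y j)) hj one_half_pos one_half_pos (add_halves 1)⟩
    _ = 1 := by
        rw [Finset.sum_add_distrib, ← Finset.smul_sum, ← Finset.smul_sum, sum_eq_one hx,
          sum_eq_one hy, Convex.combo_self (add_halves 1)]

theorem strictConvexOn_rpow_add_rpow_rpow_one_div {p r s : ℝ} (hp : 1 < p) (hr : 0 ≤ r)
    (hs : 0 ≤ s) (hrs : r ≠ s) :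
    StrictConvexOn ℝ (Ici 0) fun t : ℝ ↦ ((r + t) ^ p + (s + t) ^ p) ^ (1 / p) := by
  have : Fact (1 ≤ ENNReal.ofReal p) := ⟨ENNReal.one_le_ofReal.2 hp.le⟩
  have hp_real : (ENNReal.ofReal p).toReal = p := ENNReal.toReal_ofReal (by positivity)
  have : StrictConvexSpace ℝ (PiLp (.ofReal p) fun _ : Fin 2 ↦ ℝ) :=
    strictConvexSpace_piLp (by simpa using hp.ne') ENNReal.ofReal_ne_top
  have hindep : LinearIndependent ℝ
      ![WithLp.toLp (.ofReal p) ![r, s], WithLp.toLp (.ofReal p) ![1, 1]] := by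
    refine LinearIndependent.pair_iff.2 fun a b hab ↦ ?_
    have hr_eq : a * r + b = 0 := by simpa using congr($hab 0)
    have hs_eq : a * s + b = 0 := by simpa using congr($hab 1)
    have ha : a = 0 := by
      refine (mul_eq_zero.1 ?_).resolve_right (sub_ne_zero.2 hrs)
      linarith
    exact ⟨ha, by simpa [ha] using hr_eq⟩
  refine ((strictConvexOn_norm_add_smul hindep).subset (subset_univ _) (convex_Ici 0)).congr
    fun t ht ↦ ?_
  have ht : 0 ≤ t := ht
  dsimp only
  rw [PiLp.norm_eq_sum (by rw [hp_real]; positivity), hp_real]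
  simp [abs_of_nonneg, add_nonneg, hr, hs, ht]

theorem strictConvexOn_const_smul {𝕜 E β : Type*} [CommSemiring 𝕜] [PartialOrder 𝕜]
    [AddCommMonoid E] [SMul 𝕜 E] [AddCommMonoid β] [PartialOrder β] [Module 𝕜 β]
    [PosSMulStrictMono 𝕜 β] {s : Set E} {f : E → β} {c : 𝕜} (hc : 0 < c)
    (hf : StrictConvexOn 𝕜 s f) : StrictConvexOn 𝕜 s fun x ↦ c • f x := by
  refine ⟨hf.1, fun x hx y hy hxy a b ha hb hab ↦ ?_⟩
  calc c • f (a • x + b • y) < c • (a • f x + b • f y) :=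
        smul_lt_smul_of_pos_left (hf.2 hx hy hxy ha hb hab) hc
    _ = a • c • f x + b • c • f y := by rw [smul_add, smul_comm c, smul_comm c]

section Haar

open Metric Module

variable {E : Type*} [NormedAddCommGroup E] [NormedSpace ℝ E] [FiniteDimensional ℝ E]
  [MeasurableSpace E] [BorelSpace E] (μ : Measure E) [μ.IsAddHaarMeasure] {c x : E} {r s : ℝ}

theorem addHaar_real_closedBall_union_closedBall_add_smul {t : ℝ} (hr : 0 ≤ r) (hs : 0 ≤ s)
    (ht : 0 ≤ t) (hdist : (r + t) + (s + t) < dist c x) :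
    μ.real ((closedBall c r ∪ closedBall x s) + t • closedBall (0 : E) 1) =
      ((r + t) ^ finrank ℝ E + (s + t) ^ finrank ℝ E) * μ.real (closedBall (0 : E) 1) := by
  have : ProperSpace E := FiniteDimensional.proper_real E
  rw [smul_unitClosedBall_of_nonneg ht, union_add, closedBall_add_closedBall hr ht,
    closedBall_add_closedBall hs ht, add_zero, add_zero,
    measureReal_union (closedBall_disjoint_closedBall hdist) measurableSet_closedBall
      measure_closedBall_lt_top.ne measure_closedBall_lt_top.ne,
    Measure.addHaar_real_closedBall' μ c (by positivity),
    Measure.addHaar_real_closedBall' μ x (by positivity), add_mul]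

theorem strictConvexOn_addHaar_real_closedBall_union_closedBall_add_smul_rpow
    (hE : 2 ≤ finrank ℝ E) (hr : 0 ≤ r) (hs : 0 ≤ s) (hrs : r ≠ s) :
    StrictConvexOn ℝ (Ico 0 ((dist c x - r - s) / 2)) fun t : ℝ ↦
      μ.real ((closedBall c r ∪ closedBall x s) + t • closedBall (0 : E) 1) ^
        (1 / (finrank ℝ E : ℝ)) := by
  have hω : 0 < μ.real (closedBall (0 : E) 1) :=
    ENNReal.toReal_pos (measure_closedBall_pos μ 0 one_pos).ne' measure_closedBall_lt_top.ne
  have hroot := strictConvexOn_rpow_add_rpow_rpow_one_div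
    (p := finrank ℝ E) (by exact_mod_cast hE) hr hs hrs
  refine (strictConvexOn_const_smul (Real.rpow_pos_of_pos hω (1 / (finrank ℝ E : ℝ)))
    (hroot.subset Ico_subset_Ici_self (convex_Ico _ _))).congr fun t ⟨ht, ht'⟩ ↦ ?_
  simp only [Real.rpow_natCast, smul_eq_mul]
  rw [addHaar_real_closedBall_union_closedBall_add_smul μ hr hs ht (by linarith),
    Real.mul_rpow (by positivity) hω.le, mul_comm]

theorem parallel_volume_root_not_concave_general (hE : 2 ≤ finrank ℝ E) (hr : 0 ≤ r)
    (hs : 0 ≤ s) (hrs : r ≠ s) (hdist : r + s < dist c x) :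
    ∃ t₁ t₂ : ℝ, 0 ≤ t₁ ∧ 0 ≤ t₂ ∧ ∃ l ∈ Icc (0 : ℝ) 1,
      μ.real ((closedBall c r ∪ closedBall x s) +
          ((1 - l) * t₁ + l * t₂) • closedBall (0 : E) 1) ^ (1 / (finrank ℝ E : ℝ))
        < (1 - l) * μ.real ((closedBall c r ∪ closedBall x s) +
              t₁ • closedBall (0 : E) 1) ^ (1 / (finrank ℝ E : ℝ))
          + l * μ.real ((closedBall c r ∪ closedBall x s) +
              t₂ • closedBall (0 : E) 1) ^ (1 / (finrank ℝ E : ℝ)) := by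
  obtain ⟨t, ht, ht'⟩ : ∃ t, 0 < t ∧ t < (dist c x - r - s) / 2 := exists_between (by linarith)
  exact ⟨0, t, le_rfl, ht.le, 1 / 2, by norm_num,
    (strictConvexOn_addHaar_real_closedBall_union_closedBall_add_smul_rpow μ hE hr hs hrs).2
      ⟨le_rfl, ht.trans ht'⟩ ⟨ht.le, ht'⟩ ht.ne (by norm_num) (by norm_num) (by norm_num)⟩

end Haar

/-- Counterexample to the Costa-Cover conjecture in dimension n ≥ 2: for
`A = B₂ⁿ ∪ {2e₁}` the function `t ↦ |A + tB₂ⁿ|^{1/n}` is not concave. -/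
theorem parallel_volume_root_not_concave
    (n : ℕ) (hn : 2 ≤ n) :
    ∃ t₁ t₂ : ℝ, 0 ≤ t₁ ∧ 0 ≤ t₂ ∧ ∃ l ∈ Icc (0 : ℝ) 1,
      (volume ((Metric.closedBall (0 : EuclideanSpace ℝ (Fin n)) 1 ∪
          {(2 : ℝ) • EuclideanSpace.single (⟨0, by omega⟩ : Fin n) (1 : ℝ)}) +
          ((1 - l) * t₁ + l * t₂) •
            Metric.closedBall (0 : EuclideanSpace ℝ (Fin n)) 1)).toReal ^ (1 / (n : ℝ))
        < (1 - l) * (volume ((Metric.closedBall (0 : EuclideanSpace ℝ (Fin n)) 1 ∪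
              {(2 : ℝ) • EuclideanSpace.single (⟨0, by omega⟩ : Fin n) (1 : ℝ)}) +
              t₁ • Metric.closedBall (0 : EuclideanSpace ℝ (Fin n)) 1)).toReal ^ (1 / (n : ℝ))
          + l * (volume ((Metric.closedBall (0 : EuclideanSpace ℝ (Fin n)) 1 ∪
              {(2 : ℝ) • EuclideanSpace.single (⟨0, by omega⟩ : Fin n) (1 : ℝ)}) +
              t₂ • Metric.closedBall (0 : EuclideanSpace ℝ (Fin n)) 1)).toReal ^ (1 / (n : ℝ)) := by
  have h := parallel_volume_root_not_concave_general
    (volume : Measure (EuclideanSpace ℝ (Fin n))) (c := 0)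
    (x := (2 : ℝ) • EuclideanSpace.single ⟨0, by omega⟩ 1) (r := 1) (s := 0)
    (by simpa using hn) zero_le_one le_rfl one_ne_zero (by simp [norm_smul])
  simpa only [Metric.closedBall_zero, finrank_euclideanSpace_fin, measureReal_def] using h
end

section
/- Work in Euclidean space ℝ² with Lebesgue measure, let B₁² = {x ∈ ℝ² : |x₁| + |x₂| ≤ 1} be the closed ℓ¹ unit ball, let μ be the restriction of Lebesgue measure to B₁², and let B₂² be the closed Euclidean unit ball. Then there exist a nonempty compact connected set A ⊆ ℝ², reals t₁, t₂ ≥ 0 with μ(A + t₁·B₂²)·μ(A + t₂·B₂²) > 0, and λ ∈ [0,1] such that μ(A + ((1-λ)t₁ + λt₂)·B₂²)^{1/2} < (1-λ)·μ(A + t₁·B₂²)^{1/2} + λ·μ(A + t₂·B₂²)^{1/2}. -/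
open MeasureTheory Set Pointwise

/-!
In the coordinates `s = x₀ + x₁`, `d = x₀ - x₁` the `ℓ¹` unit ball is the square `[-1, 1]²`, and
distances are multiplied by `√2`. Let `A` be a bracket made of the half `s ≤ 0` of a larger square,
the piece `s ≥ 3/2` outside the `ℓ¹` ball, and a bridge `d ≥ 3/2` joining the two outside the ball.
While the neighbourhood of `A` grows, it first sweeps the ball from one side only, so that its area
in the ball is `1 + r` at radius `r / √2` with `r < 1/2`. Later it sweeps from both sides, and at
`r = 3/4` the whole ball, of area `2`, is covered. The values `1`, `11/8`, `2` at `r = 0`, `3/8`,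
`3/4` violate log-concavity because `(11/8)² < 1 * 2`, and every `p`-concave function with `p > 0`
is log-concave.
-/

namespace ParallelVolume

section Normed

variable {E : Type*} [NormedAddCommGroup E] [NormedSpace ℝ E]

/-- The parallel `μ`-volume `t ↦ μ(A + t B)` of `A`, where `B` is the closed unit ball. It is
real-valued, so a parallel set of infinite measure gets the value `0`. -/
noncomputable def parallelVolume [MeasurableSpace E] (μ : Measure E) (A : Set E) (t : ℝ) : ℝ :=
  μ.real (A + t • Metric.closedBall (0 : E) 1)

lemma mem_add_smul_closedBall {A : Set E} {t : ℝ} (ht : 0 ≤ t) {x : E} :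
    x ∈ A + t • Metric.closedBall (0 : E) 1 ↔ ∃ a ∈ A, ‖x - a‖ ≤ t := by
  rw [smul_unitClosedBall_of_nonneg ht, mem_add]
  constructor
  · rintro ⟨a, ha, b, hb, rfl⟩
    exact ⟨a, ha, by simpa using hb⟩
  · rintro ⟨a, ha, h⟩
    exact ⟨a, ha, x - a, by simpa using h, by simp⟩

end Normed

/-- The Euclidean plane. -/
abbrev Plane := EuclideanSpace ℝ (Fin 2)

/-- The diagonal coordinates `(x₀ + x₁, x₀ - x₁)`, which turn the `ℓ¹` unit ball into a square. -/
noncomputable def diagCoords : Plane ≃L[ℝ] ℝ × ℝ :=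
  LinearEquiv.toContinuousLinearEquiv
    { toFun := fun x => (x 0 + x 1, x 0 - x 1)
      invFun := fun p => !₂[(p.1 + p.2) / 2, (p.1 - p.2) / 2]
      map_add' := fun x y => by ext <;> simp <;> ring
      map_smul' := fun c x => by ext <;> simp <;> ring
      left_inv := fun x => by ext i; fin_cases i <;> simp
      right_inv := fun p => by ext <;> simp <;> ring }

/-- The product of `I` and `J` in diagonal coordinates; for intervals, a rectangle with sides in the
diagonal directions. -/
def diagProd (I J : Set ℝ) : Set Plane := diagCoords ⁻¹' I ×ˢ J

lemma two_mul_norm_sq (x : Plane) :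
    2 * ‖x‖ ^ 2 = (diagCoords x).1 ^ 2 + (diagCoords x).2 ^ 2 := by
  simp only [EuclideanSpace.norm_sq_eq, Fin.sum_univ_two, Real.norm_eq_abs, sq_abs]
  change _ = (x 0 + x 1) ^ 2 + (x 0 - x 1) ^ 2
  ring

lemma norm_le_div_sqrt_two_iff {x : Plane} {r : ℝ} (hr : 0 ≤ r) :
    ‖x‖ ≤ r / √2 ↔ (diagCoords x).1 ^ 2 + (diagCoords x).2 ^ 2 ≤ r ^ 2 := by
  rw [← sq_le_sq₀ (norm_nonneg x) (by positivity), div_pow, Real.sq_sqrt zero_le_two,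
    le_div_iff₀ two_pos, mul_comm, two_mul_norm_sq]

section diagProd

variable {I J : Set ℝ}

lemma isCompact_diagProd (hI : IsCompact I) (hJ : IsCompact J) : IsCompact (diagProd I J) :=
  diagCoords.toHomeomorph.isCompact_preimage.2 (hI.prod hJ)

lemma convex_diagProd (hI : Convex ℝ I) (hJ : Convex ℝ J) : Convex ℝ (diagProd I J) :=
  (hI.prod hJ).linear_preimage diagCoords.toLinearMap

lemma volume_diagProd (I J : Set ℝ) : volume (diagProd I J) = volume I * volume J / 2 := by
  let M : Matrix (Fin 2) (Fin 2) ℝ := !![1, 1; 1, -1]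
  have hdet : LinearMap.det (Matrix.toLin' M) = -2 := by
    rw [LinearMap.det_toLin', Matrix.det_fin_two_of]; norm_num
  have hpre : diagProd I J = (MeasurableEquiv.toLp 2 (Fin 2 → ℝ)).symm ⁻¹'
      (Matrix.toLin' M ⁻¹' univ.pi ![I, J]) := by
    ext x
    simp [diagProd, diagCoords, M, Matrix.vecHead, Matrix.vecTail, sub_eq_add_neg]
  rw [hpre,
    (EuclideanSpace.volume_preserving_symm_measurableEquiv_toLp (Fin 2)).measure_preimage_equiv,
    Measure.addHaar_preimage_linearMap _ (by rw [hdet]; norm_num), hdet, volume_pi_pi,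
    Fin.prod_univ_two, abs_inv, abs_neg, abs_two, ENNReal.ofReal_inv_of_pos two_pos,
    ENNReal.ofReal_ofNat, mul_comm, ← div_eq_mul_inv]
  rfl

lemma volume_real_diagProd_Icc {a b c d : ℝ} (hab : a ≤ b) (hcd : c ≤ d) :
    volume.real (diagProd (Icc a b) (Icc c d)) = (b - a) * (d - c) / 2 := by
  simp [Measure.real, volume_diagProd, hab, hcd]

end diagProd

variable {r : ℝ}

lemma diagProd_Icc_add_smul_closedBall_subset {a b c d : ℝ} (hr : 0 ≤ r) :
    diagProd (Icc a b) (Icc c d) + (r / √2) • Metric.closedBall (0 : Plane) 1 ⊆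
      diagProd (Icc (a - r) (b + r)) (Icc (c - r) (d + r)) := by
  intro x hx
  obtain ⟨y, ⟨⟨hay, hyb⟩, hcy, hyd⟩, hxy⟩ := (mem_add_smul_closedBall (by positivity)).1 hx
  rw [norm_le_div_sqrt_two_iff hr, map_sub, Prod.fst_sub, Prod.snd_sub] at hxy
  have hfst := abs_le.1 (abs_le_of_sq_le_sq ((le_add_of_nonneg_right (sq_nonneg _)).trans hxy) hr)
  have hsnd := abs_le.1 (abs_le_of_sq_le_sq ((le_add_of_nonneg_left (sq_nonneg _)).trans hxy) hr)
  exact ⟨⟨by linarith, by linarith⟩, by linarith, by linarith⟩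

lemma diagProd_Icc_subset_add_smul_closedBall {a b : ℝ} (hab : a ≤ b) (hr : 0 ≤ r) (J : Set ℝ) :
    diagProd (Icc (a - r) (b + r)) J ⊆
      diagProd (Icc a b) J + (r / √2) • Metric.closedBall (0 : Plane) 1 := by
  have hIcc : Icc (a - r) (b + r) = Icc a b + Icc (-r) r := by
    rw [Icc_add_Icc hab (neg_le_self hr), sub_eq_add_neg]
  rw [hIcc]
  rintro x ⟨⟨s, hs, e, he, hse : s + e = (diagCoords x).1⟩, hxJ⟩
  refine (mem_add_smul_closedBall (by positivity)).2
    ⟨diagCoords.symm (s, (diagCoords x).2), by simpa [diagProd] using ⟨hs, hxJ⟩, ?_⟩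
  rw [norm_le_div_sqrt_two_iff hr]
  simpa [← hse] using sq_le_sq' he.1 he.2

/-- The closed `ℓ¹` unit ball of the plane. -/
def diamond : Set Plane := {x | |x 0| + |x 1| ≤ 1}

lemma diamond_eq_diagProd : diamond = diagProd (Icc (-1) 1) (Icc (-1) 1) := by
  ext x
  change |x 0| + |x 1| ≤ 1 ↔ (-1 ≤ x 0 + x 1 ∧ x 0 + x 1 ≤ 1) ∧ -1 ≤ x 0 - x 1 ∧ x 0 - x 1 ≤ 1
  grind

/-- The set whose parallel volume in `diamond` is not log-concave: two diagonal rectangles joined by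
a third one that stays away from `diamond`. -/
def bracket : Set Plane :=
  diagProd (Icc (-2) 0) (Icc (-2) 2) ∪ diagProd (Icc (-2) 2) (Icc (3 / 2) 2) ∪
    diagProd (Icc (3 / 2) 2) (Icc (-2) 2)

lemma isCompact_bracket : IsCompact bracket :=
  ((isCompact_diagProd isCompact_Icc isCompact_Icc).union
    (isCompact_diagProd isCompact_Icc isCompact_Icc)).union
      (isCompact_diagProd isCompact_Icc isCompact_Icc)

lemma isConnected_bracket : IsConnected bracket := by
  have hrect {a b c d : ℝ} : IsPreconnected (diagProd (Icc a b) (Icc c d)) :=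
    (convex_diagProd (convex_Icc a b) (convex_Icc c d)).isPreconnected
  have hmem {I J : Set ℝ} {s d : ℝ} (hs : s ∈ I) (hd : d ∈ J) :
      diagCoords.symm (s, d) ∈ diagProd I J := by
    simpa [diagProd] using ⟨hs, hd⟩
  have hlow : diagCoords.symm (0, 2) ∈ diagProd (Icc (-2) 0) (Icc (-2) 2) :=
    hmem (by norm_num) (by norm_num)
  have hlow_bridge : diagCoords.symm (0, 2) ∈ diagProd (Icc (-2) 2) (Icc (3 / 2) 2) :=
    hmem (by norm_num) (by norm_num)
  have hhigh_bridge : diagCoords.symm (2, 2) ∈ diagProd (Icc (-2) 2) (Icc (3 / 2) 2) :=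
    hmem (by norm_num) (by norm_num)
  have hhigh : diagCoords.symm (2, 2) ∈ diagProd (Icc (3 / 2) 2) (Icc (-2) 2) :=
    hmem (by norm_num) (by norm_num)
  exact ⟨⟨_, .inl (.inl hlow)⟩, IsPreconnected.union _ (.inr hhigh_bridge) hhigh
    (IsPreconnected.union _ hlow hlow_bridge hrect hrect) hrect⟩

lemma parallelVolume_diamond (A : Set Plane) (t : ℝ) :
    parallelVolume (volume.restrict diamond) A t =
      volume.real ((A + t • Metric.closedBall (0 : Plane) 1) ∩ diamond) := by
  refine measureReal_restrict_apply' ?_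
  rw [diamond_eq_diagProd]
  exact (isCompact_diagProd isCompact_Icc isCompact_Icc).measurableSet

lemma bracket_add_inter_diamond_of_lt (hr : 0 ≤ r) (hr' : r < 1 / 2) :
    (bracket + (r / √2) • Metric.closedBall (0 : Plane) 1) ∩ diamond =
      diagProd (Icc (-1) r) (Icc (-1) 1) := by
  rw [bracket, union_add, union_add, diamond_eq_diagProd]
  refine Subset.antisymm ?_ ?_
  · rintro x ⟨(hx | hx) | hx, ⟨hs, hs'⟩, hd⟩ <;>
      obtain ⟨⟨hxs, hxs'⟩, hxd, -⟩ := diagProd_Icc_add_smul_closedBall_subset hr hx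
    · exact ⟨⟨hs, by linarith⟩, hd⟩
    · linarith [hd.2]
    · linarith
  · rintro x ⟨⟨hs, hs'⟩, hd, hd'⟩
    exact ⟨.inl (.inl (diagProd_Icc_subset_add_smul_closedBall (by norm_num) hr _
      ⟨⟨by linarith, by linarith⟩, by linarith, by linarith⟩)),
      ⟨hs, by linarith⟩, hd, hd'⟩

lemma diamond_subset_bracket_add (hr : 3 / 4 ≤ r) :
    diamond ⊆ bracket + (r / √2) • Metric.closedBall (0 : Plane) 1 := by
  rw [bracket, union_add, union_add, diamond_eq_diagProd]
  rintro x ⟨⟨hs, hs'⟩, hd, hd'⟩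
  have hr₀ : 0 ≤ r := by linarith
  rcases le_total (diagCoords x).1 (3 / 4) with h | h
  · exact .inl (.inl (diagProd_Icc_subset_add_smul_closedBall (by norm_num) hr₀ _
      ⟨⟨by linarith, by linarith⟩, by linarith, by linarith⟩))
  · exact .inr (diagProd_Icc_subset_add_smul_closedBall (by norm_num) hr₀ _
      ⟨⟨by linarith, by linarith⟩, by linarith, by linarith⟩)

lemma parallelVolume_bracket_of_lt (hr : 0 ≤ r) (hr' : r < 1 / 2) :
    parallelVolume (volume.restrict diamond) bracket (r / √2) = 1 + r := by
  rw [parallelVolume_diamond, bracket_add_inter_diamond_of_lt hr hr',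
    volume_real_diagProd_Icc (by linarith) (by norm_num)]
  ring

lemma parallelVolume_bracket_of_ge (hr : 3 / 4 ≤ r) :
    parallelVolume (volume.restrict diamond) bracket (r / √2) = 2 := by
  rw [parallelVolume_diamond, inter_eq_self_of_subset_right (diamond_subset_bracket_add hr),
    diamond_eq_diagProd, volume_real_diagProd_Icc (by norm_num) (by norm_num)]
  norm_num

lemma rpow_lt_arith_mean_of_lt_geom_mean {m a b l p : ℝ} (hm : 0 ≤ m) (ha : 0 ≤ a) (hb : 0 ≤ b)
    (hl : l ∈ Icc (0 : ℝ) 1) (hp : 0 < p) (h : m < a ^ (1 - l) * b ^ l) :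
    m ^ p < (1 - l) * a ^ p + l * b ^ p :=
  calc m ^ p < (a ^ (1 - l) * b ^ l) ^ p := Real.rpow_lt_rpow hm h hp
    _ = (a ^ p) ^ (1 - l) * (b ^ p) ^ l := by
      rw [Real.mul_rpow (by positivity) (by positivity), ← Real.rpow_mul ha, ← Real.rpow_mul hb,
        mul_comm (1 - l), mul_comm l, Real.rpow_mul ha, Real.rpow_mul hb]
    _ ≤ (1 - l) * a ^ p + l * b ^ p :=
      Real.geom_mean_le_arith_mean2_weighted (sub_nonneg.2 hl.2) hl.1 (by positivity)
        (by positivity) (by ring)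

end ParallelVolume

open ParallelVolume

theorem parallel_volume_connected_not_half_concave_general :
    ∃ A : Set Plane, IsCompact A ∧ IsConnected A ∧
      ∃ t₁ t₂ : ℝ, 0 ≤ t₁ ∧ 0 ≤ t₂ ∧
        0 < parallelVolume (volume.restrict diamond) A t₁ *
            parallelVolume (volume.restrict diamond) A t₂ ∧
        ∃ l ∈ Icc (0 : ℝ) 1,
          parallelVolume (volume.restrict diamond) A ((1 - l) * t₁ + l * t₂) <
            parallelVolume (volume.restrict diamond) A t₁ ^ (1 - l) *
              parallelVolume (volume.restrict diamond) A t₂ ^ l := by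
  have hstart := parallelVolume_bracket_of_lt le_rfl one_half_pos
  have hmid := parallelVolume_bracket_of_lt (r := 3 / 8) (by norm_num) (by norm_num)
  have hend := parallelVolume_bracket_of_ge (le_refl (3 / 4))
  refine ⟨bracket, isCompact_bracket, isConnected_bracket, 0 / √2, 3 / 4 / √2, by positivity,
    by positivity, by rw [hstart, hend]; norm_num, 1 / 2, by norm_num, ?_⟩
  rw [show (1 - 1 / 2 : ℝ) * (0 / √2) + 1 / 2 * (3 / 4 / √2) = 3 / 8 / √2 by ring, hstart, hmid,
    hend, add_zero, Real.one_rpow, one_mul, ← Real.sqrt_eq_rpow]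
  exact Real.lt_sqrt_of_sq_lt (by norm_num)

/-- In dimension 2 there is a compact connected set A such that the parallel
μ-volume for the (1/2-concave) uniform measure μ on the ℓ¹ unit ball is not
1/2-concave. -/
theorem parallel_volume_connected_not_half_concave :
    ∃ A : Set (EuclideanSpace ℝ (Fin 2)), A.Nonempty ∧ IsCompact A ∧ IsConnected A ∧
      ∃ t₁ t₂ : ℝ, 0 ≤ t₁ ∧ 0 ≤ t₂ ∧
        0 < ((volume.restrict {x : EuclideanSpace ℝ (Fin 2) | |x 0| + |x 1| ≤ 1})
              (A + t₁ • Metric.closedBall (0 : EuclideanSpace ℝ (Fin 2)) 1)).toReal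
            * ((volume.restrict {x : EuclideanSpace ℝ (Fin 2) | |x 0| + |x 1| ≤ 1})
              (A + t₂ • Metric.closedBall (0 : EuclideanSpace ℝ (Fin 2)) 1)).toReal ∧
        ∃ l ∈ Icc (0 : ℝ) 1,
          ((volume.restrict {x : EuclideanSpace ℝ (Fin 2) | |x 0| + |x 1| ≤ 1})
              (A + ((1 - l) * t₁ + l * t₂) •
                Metric.closedBall (0 : EuclideanSpace ℝ (Fin 2)) 1)).toReal ^ (1 / 2 : ℝ)
            < (1 - l) * ((volume.restrict {x : EuclideanSpace ℝ (Fin 2) | |x 0| + |x 1| ≤ 1})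
                (A + t₁ • Metric.closedBall (0 : EuclideanSpace ℝ (Fin 2)) 1)).toReal ^ (1 / 2 : ℝ)
              + l * ((volume.restrict {x : EuclideanSpace ℝ (Fin 2) | |x 0| + |x 1| ≤ 1})
                (A + t₂ • Metric.closedBall (0 : EuclideanSpace ℝ (Fin 2)) 1)).toReal ^ (1 / 2 : ℝ) := by
  obtain ⟨A, hcomp, hconn, t₁, t₂, ht₁, ht₂, hpos, l, hl, hlt⟩ :=
    parallel_volume_connected_not_half_concave_general
  exact ⟨A, hconn.nonempty, hcomp, hconn, t₁, t₂, ht₁, ht₂, hpos, l, hl,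
    rpow_lt_arith_mean_of_lt_geom_mean measureReal_nonneg measureReal_nonneg measureReal_nonneg
      hl one_half_pos hlt⟩
end

section
/- Let s ∈ (0, 1/2], let γ = s/(1-s), let μ be the Borel measure on ℝ with density x ↦ x^{1/γ}·1_{[0,3]}(x) with respect to Lebesgue measure, let A = [0,1] ∪ [2,3], and let B = [0,1]. Then the function t ↦ μ(A + t·B) is not s-concave on [0,∞): there exist t₁, t₂ ≥ 0 with μ(A + t₁·B)·μ(A + t₂·B) > 0 and λ ∈ [0,1] such that μ(A + ((1-λ)t₁ + λt₂)·B) < ((1-λ)·μ(A + t₁·B)^s + λ·μ(A + t₂·B)^s)^{1/s}. -/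
open MeasureTheory Set Pointwise

/-!
Put `p = 1 / s`. As long as `t ≤ 1`, the parallel set `A + t • B = [0, 1 + t] ∪ [2, 3 + t]` grows
inside `[0, 3]` only through its left component, so `μ (A + t • B) = s * ((1 + t) ^ p + c)` with
the constant `c = 3 ^ p - 2 ^ p > 0` coming from the right component. The `s`-th power of this is,
up to a factor, the `ℓᵖ` norm of the vector `(1 + t, c ^ (1 / p))`, and such a norm is strictly
convex along a line which misses the origin.
-/

theorem strictMonoOn_rpow_div_mul_rpow_add {p k c : ℝ} (hp : 0 < p) (hk : 0 ≤ k) (hc : 0 < c) :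
    StrictMonoOn (fun x : ℝ => x ^ p / (k * x ^ p + c)) (Ici 0) := by
  intro x hx y hy hxy
  have hx0 : 0 ≤ x ^ p := Real.rpow_nonneg hx p
  have hy0 : 0 ≤ y ^ p := Real.rpow_nonneg hy p
  have hlt : x ^ p < y ^ p := Real.rpow_lt_rpow hx hxy hp
  rw [div_lt_div_iff₀ (by positivity) (by positivity)]
  nlinarith

-- The derivative is put in a form that `strictMonoOn_rpow_div_mul_rpow_add` shows to be increasing.
theorem hasDerivAt_mul_rpow_add_rpow_inv {p k c x : ℝ} (hp : p ≠ 0) (hk : 0 ≤ k) (hc : 0 < c)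
    (hx : 0 < x) :
    HasDerivAt (fun x : ℝ => (k * x ^ p + c) ^ p⁻¹)
      (k * (x ^ p / (k * x ^ p + c)) ^ (1 - p⁻¹)) x := by
  have hbase : 0 < k * x ^ p + c := by positivity
  have hinner : HasDerivAt (fun x : ℝ => k * x ^ p + c) (k * (p * x ^ (p - 1))) x :=
    ((Real.hasDerivAt_rpow_const (Or.inl hx.ne')).const_mul k).add_const c
  convert hinner.rpow_const (p := p⁻¹) (Or.inl hbase.ne') using 1
  have hnum : (x ^ p) ^ (1 - p⁻¹) = x ^ (p - 1) := by
    rw [← Real.rpow_mul hx.le, mul_one_sub, mul_inv_cancel₀ hp]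
  rw [Real.div_rpow (by positivity) hbase.le, hnum, ← neg_sub 1 p⁻¹, Real.rpow_neg hbase.le]
  field_simp

theorem strictConvexOn_mul_rpow_add_rpow_inv {p k c : ℝ} (hp : 1 < p) (hk : 0 < k) (hc : 0 < c) :
    StrictConvexOn ℝ (Ici 0) fun x : ℝ => (k * x ^ p + c) ^ p⁻¹ := by
  have hp0 : 0 < p := one_pos.trans hp
  refine StrictMonoOn.strictConvexOn_of_deriv (convex_Ici 0) ?_ ?_
  · refine ContinuousOn.rpow_const ?_ fun x _ => Or.inr (inv_nonneg.2 hp0.le)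
    exact ((Real.continuous_rpow_const hp0.le).const_mul k |>.add_const c).continuousOn
  · rw [interior_Ici]
    intro x hx y hy hxy
    rw [(hasDerivAt_mul_rpow_add_rpow_inv hp0.ne' hk.le hc hx).deriv,
      (hasDerivAt_mul_rpow_add_rpow_inv hp0.ne' hk.le hc hy).deriv]
    have hx0 : 0 < x := hx
    have hratio := strictMonoOn_rpow_div_mul_rpow_add hp0 hk.le hc hx0.le (hx0.trans hxy).le hxy
    have hexp : 0 < 1 - p⁻¹ := sub_pos.2 (inv_lt_one_of_one_lt₀ hp)
    gcongr

theorem smul_Icc_zero_one {t : ℝ} (ht : 0 ≤ t) : t • Icc (0 : ℝ) 1 = Icc 0 t := by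
  simpa [← image_smul] using image_mul_left_Icc (a := t) ht zero_le_one

theorem Icc_union_Icc_add_smul_Icc {a b c d t : ℝ} (hab : a ≤ b) (hcd : c ≤ d) (ht : 0 ≤ t) :
    (Icc a b ∪ Icc c d) + t • Icc (0 : ℝ) 1 = Icc a (b + t) ∪ Icc c (d + t) := by
  rw [smul_Icc_zero_one ht, union_add, Icc_add_Icc hab ht, Icc_add_Icc hcd ht, add_zero, add_zero]

/-- The measure on `ℝ` with density `x ^ q` on `[0, r]`, the test measure of the counterexample.
The density is spelled as in the theorem, so that the two agree definitionally. -/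
noncomputable def truncatedPowerMeasure (q r : ℝ) : Measure ℝ :=
  volume.withDensity fun x => ENNReal.ofReal (if x ∈ Icc (0 : ℝ) r then x ^ q else 0)

section TruncatedPowerMeasure

variable {q r a b t : ℝ}

theorem truncatedPowerMeasure_Icc (hq : -1 < q) (ha : 0 ≤ a) (hab : a ≤ b) (har : a ≤ r) :
    truncatedPowerMeasure q r (Icc a b) =
      ENNReal.ofReal ((min b r ^ (q + 1) - a ^ (q + 1)) / (q + 1)) := by
  have hdensity : (fun x : ℝ => ENNReal.ofReal (if x ∈ Icc (0 : ℝ) r then x ^ q else 0)) =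
      (Icc (0 : ℝ) r).indicator fun x => ENNReal.ofReal (x ^ q) := by
    ext x
    simp only [indicator_apply, apply_ite ENNReal.ofReal, ENNReal.ofReal_zero]
  have hle : a ≤ min b r := le_min hab har
  have hintegrable : IntegrableOn (fun x : ℝ => x ^ q) (Icc a (min b r)) :=
    (intervalIntegrable_iff_integrableOn_Icc_of_le hle).1
      (intervalIntegral.intervalIntegrable_rpow' hq)
  have hnonneg : ∀ᵐ x ∂volume.restrict (Icc a (min b r)), 0 ≤ x ^ q := by
    filter_upwards [ae_restrict_mem measurableSet_Icc] with x hx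
    exact Real.rpow_nonneg (ha.trans hx.1) q
  rw [truncatedPowerMeasure, withDensity_apply _ measurableSet_Icc, hdensity,
    setLIntegral_indicator measurableSet_Icc, Icc_inter_Icc, sup_of_le_right ha, inf_comm,
    ← ofReal_integral_eq_lintegral_ofReal hintegrable hnonneg, integral_Icc_eq_integral_Ioc,
    ← intervalIntegral.integral_of_le hle, integral_rpow (Or.inl hq)]

theorem truncatedPowerMeasure_real_Icc (hq : -1 < q) (ha : 0 ≤ a) (hab : a ≤ b) (har : a ≤ r) :
    (truncatedPowerMeasure q r).real (Icc a b) =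
      (min b r ^ (q + 1) - a ^ (q + 1)) / (q + 1) := by
  have hq0 : 0 < q + 1 := by linarith
  have hpow : a ^ (q + 1) ≤ min b r ^ (q + 1) :=
    Real.rpow_le_rpow ha (le_min hab har) hq0.le
  rw [measureReal_def, truncatedPowerMeasure_Icc hq ha hab har,
    ENNReal.toReal_ofReal (div_nonneg (sub_nonneg.2 hpow) hq0.le)]

theorem truncatedPowerMeasure_real_parallelSet (hq : -1 < q) (ha : 0 ≤ a) (ht : 0 ≤ t)
    (hatb : a + t ≤ b) (hbr : b ≤ r) :
    (truncatedPowerMeasure q r).real ((Icc 0 a ∪ Icc b r) + t • Icc (0 : ℝ) 1) =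
      (q + 1)⁻¹ * (a + t) ^ (q + 1) + (r ^ (q + 1) - b ^ (q + 1)) / (q + 1) := by
  have hat : 0 ≤ a + t := add_nonneg ha ht
  have hb : 0 ≤ b := hat.trans hatb
  have hr : 0 ≤ r := hb.trans hbr
  have hbrt : b ≤ r + t := by linarith
  have hdisj : AEDisjoint (truncatedPowerMeasure q r) (Icc 0 (a + t)) (Icc b (r + t)) :=
    withDensity_absolutelyContinuous _ _ <| measure_mono_null (t := {b})
      (fun x hx => le_antisymm (hx.1.2.trans hatb) hx.2.1) (measure_singleton b)
  have hleft : truncatedPowerMeasure q r (Icc 0 (a + t)) ≠ ⊤ := by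
    simp only [truncatedPowerMeasure_Icc hq le_rfl hat hr, ne_eq, ENNReal.ofReal_ne_top,
      not_false_eq_true]
  have hright : truncatedPowerMeasure q r (Icc b (r + t)) ≠ ⊤ := by
    simp only [truncatedPowerMeasure_Icc hq hb hbrt hbr, ne_eq, ENNReal.ofReal_ne_top,
      not_false_eq_true]
  rw [Icc_union_Icc_add_smul_Icc ha hbr ht,
    measureReal_union₀ measurableSet_Icc.nullMeasurableSet hdisj hleft hright,
    truncatedPowerMeasure_real_Icc hq le_rfl hat hr,
    truncatedPowerMeasure_real_Icc hq hb hbrt hbr, min_eq_left (hatb.trans hbr),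
    min_eq_right (le_add_of_nonneg_right ht), Real.zero_rpow (by linarith), sub_zero,
    inv_mul_eq_div]

theorem truncatedPowerMeasure_real_parallelSet_pos (hq : -1 < q) (ha : 0 ≤ a) (ht : 0 ≤ t)
    (hatb : a + t ≤ b) (hbr : b < r) :
    0 < (truncatedPowerMeasure q r).real ((Icc 0 a ∪ Icc b r) + t • Icc (0 : ℝ) 1) := by
  have hq0 : 0 < q + 1 := by linarith
  have hat : 0 ≤ a + t := add_nonneg ha ht
  have hpow : b ^ (q + 1) < r ^ (q + 1) := Real.rpow_lt_rpow (hat.trans hatb) hbr hq0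
  rw [truncatedPowerMeasure_real_parallelSet hq ha ht hatb hbr.le]
  exact add_pos_of_nonneg_of_pos (by positivity) (div_pos (sub_pos.2 hpow) hq0)

theorem strictConvexOn_truncatedPowerMeasure_real_parallelSet_rpow (hq : 0 < q) (ha : 0 ≤ a)
    (hb : 0 ≤ b) (hbr : b < r) :
    StrictConvexOn ℝ (Icc 0 (b - a)) fun t : ℝ =>
      (truncatedPowerMeasure q r).real ((Icc 0 a ∪ Icc b r) + t • Icc (0 : ℝ) 1) ^ (q + 1)⁻¹ := by
  have hq1 : 0 < q + 1 := by linarith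
  have hc : 0 < (r ^ (q + 1) - b ^ (q + 1)) / (q + 1) :=
    div_pos (sub_pos.2 (Real.rpow_lt_rpow hb hbr hq1)) hq1
  have hconv := (strictConvexOn_mul_rpow_add_rpow_inv (lt_add_of_pos_left 1 hq) (inv_pos.2 hq1)
    hc).translate_right a
  refine (hconv.subset (fun t ht => add_nonneg ha ht.1) (convex_Icc 0 (b - a))).congr fun t ht => ?_
  rw [Function.comp_apply,
    truncatedPowerMeasure_real_parallelSet (by linarith) ha ht.1 (by linarith [ht.2]) hbr.le]

end TruncatedPowerMeasure

theorem parallel_volume_not_sconcave_asymmetric_body_general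
    {s : ℝ} (hs : s ∈ Ioo (0 : ℝ) 1) {γ : ℝ} (hγ : γ = s / (1 - s))
    {a b r : ℝ} (ha : 0 ≤ a) (hab : a < b) (hbr : b < r)
    {μ : Measure ℝ}
    (hμ : μ = volume.withDensity fun x =>
      ENNReal.ofReal (if x ∈ Icc (0 : ℝ) r then x ^ (1 / γ) else 0))
    {A B : Set ℝ} (hA : A = Icc (0 : ℝ) a ∪ Icc b r) (hB : B = Icc (0 : ℝ) 1) :
    ∃ t₁ t₂ : ℝ, 0 ≤ t₁ ∧ 0 ≤ t₂ ∧
      0 < (μ (A + t₁ • B)).toReal * (μ (A + t₂ • B)).toReal ∧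
      ∃ l ∈ Icc (0 : ℝ) 1,
        (μ (A + ((1 - l) * t₁ + l * t₂) • B)).toReal <
          ((1 - l) * (μ (A + t₁ • B)).toReal ^ s
            + l * (μ (A + t₂ • B)).toReal ^ s) ^ (1 / s) := by
  obtain ⟨hs0, hs1⟩ := hs
  have hγ0 : 0 < γ := hγ ▸ div_pos hs0 (sub_pos.2 hs1)
  have hexp : (1 / γ + 1)⁻¹ = s := by
    rw [hγ, one_div_div, div_add_one hs0.ne', sub_add_cancel, one_div, inv_inv]
  have hpos {t : ℝ} (ht : 0 ≤ t) (htb : a + t ≤ b) : 0 < (μ (A + t • B)).toReal := by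
    rw [hμ, hA, hB]
    exact truncatedPowerMeasure_real_parallelSet_pos (by linarith [one_div_pos.2 hγ0]) ha ht htb hbr
  have hconv : StrictConvexOn ℝ (Icc 0 (b - a)) fun t => (μ (A + t • B)).toReal ^ s := by
    have := strictConvexOn_truncatedPowerMeasure_real_parallelSet_rpow (one_div_pos.2 hγ0) ha
      (ha.trans hab.le) hbr
    rwa [hexp, ← hB, ← hA, truncatedPowerMeasure, ← hμ] at this
  have hba : 0 < b - a := sub_pos.2 hab
  have hpos₁ := hpos (t := 0) le_rfl (by linarith)
  have hpos₂ := hpos hba.le (by linarith)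
  refine ⟨0, b - a, le_rfl, hba.le, mul_pos hpos₁ hpos₂, 1 / 2, by norm_num, ?_⟩
  rw [one_div s, Real.lt_rpow_inv_iff_of_pos ENNReal.toReal_nonneg (by positivity) hs0]
  exact hconv.2 (left_mem_Icc.2 hba.le) (right_mem_Icc.2 hba.le) hba.ne (by norm_num)
    (by norm_num) (by norm_num)

/-- The symmetric interval cannot be replaced by an arbitrary convex body:
for `B = [0,1]`, `A = [0,1] ∪ [2,3]` and the s-concave measure with density
`x^{1/γ} 1_{[0,3]}`, the parallel μ-volume `t ↦ μ(A + tB)` is not s-concave. -/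
theorem parallel_volume_not_sconcave_asymmetric_body
    (s : ℝ) (hs : s ∈ Ioc (0 : ℝ) (1 / 2)) (γ : ℝ) (hγ : γ = s / (1 - s))
    (μ : Measure ℝ)
    (hμ : μ = volume.withDensity fun x =>
      ENNReal.ofReal (if x ∈ Icc (0 : ℝ) 3 then x ^ (1 / γ) else 0))
    (A B : Set ℝ) (hA : A = Icc (0 : ℝ) 1 ∪ Icc 2 3) (hB : B = Icc (0 : ℝ) 1) :
    ∃ t₁ t₂ : ℝ, 0 ≤ t₁ ∧ 0 ≤ t₂ ∧
      0 < (μ (A + t₁ • B)).toReal * (μ (A + t₂ • B)).toReal ∧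
      ∃ l ∈ Icc (0 : ℝ) 1,
        (μ (A + ((1 - l) * t₁ + l * t₂) • B)).toReal <
          ((1 - l) * (μ (A + t₁ • B)).toReal ^ s
            + l * (μ (A + t₂ • B)).toReal ^ s) ^ (1 / s) :=
  parallel_volume_not_sconcave_asymmetric_body_general ⟨hs.1, hs.2.trans_lt (by norm_num)⟩ hγ
    zero_le_one one_lt_two (by norm_num) hμ hA hB
end

section
/- Let n ≥ 1 and let γ ∈ ℝ with γ ≠ 0. Let f, g : ℝⁿ → [0,∞) be bounded γ-concave functions. For t > 0 define h_t(z) = sup{((f(x))^γ + t·(g(y))^γ)^{1/γ} : x, y ∈ ℝⁿ, z = x + t·y, f(x) > 0, g(y) > 0} (with sup of the empty set taken as 0). Then for all t₁, t₂ > 0, all λ ∈ [0,1], and all y₁, y₂ ∈ ℝⁿ such that the defining sets of h_{t₁}(y₁) and of h_{t₂}(y₂) are nonempty, one has h_{(1-λ)t₁ + λt₂}((1-λ)y₁ + λy₂) ≥ ((1-λ)·h_{t₁}(y₁)^γ + λ·h_{t₂}(y₂)^γ)^{1/γ}. -/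
open MeasureTheory Set Pointwise

/-!
Split `z₁ = x₁ + t₁ • w₁` and `z₂ = x₂ + t₂ • w₂`, and put `t = (1 - l) * t₁ + l * t₂`. The
barycentre of `z₁` and `z₂` is `x + t • w`, where `x` averages `x₁, x₂` with weights `(1 - l, l)`
but `w` averages `w₁, w₂` with the tilted weights `((1 - l) * t₁ / t, l * t₂ / t)`. With these
weights the `γ`-mean of the two values competing in `h t₁ z₁` and `h t₂ z₂` is exactly
`(u ^ γ + t * v ^ γ) ^ (1 / γ)`, where `u` and `v` are the `γ`-means of `f x₁, f x₂` and of
`g w₁, g w₂`. By `γ`-concavity `u ≤ f x` and `v ≤ g w`, so monotonicity bounds it by a value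
competing in `h t (x + t • w)`. The passage to the two suprema is by continuity of the `γ`-mean
on positive reals.
-/

/-- The weighted `γ`-power sum of `u` and `v` with weights `a` and `b`. It is the `γ`-mean of
`γ`-concavity for weights `(1 - l, l)`, and the quantity maximized in the `γ`-supremal convolution
for weights `(1, t)`. -/
noncomputable def rpowSum (γ a b u v : ℝ) : ℝ :=
  (a * u ^ γ + b * v ^ γ) ^ (1 / γ)

section rpowSum

variable {γ a b u v : ℝ}

lemma mul_add_mul_pos_of_weights {x y : ℝ} (ha : 0 ≤ a) (hb : 0 ≤ b) (hab : 0 < a + b)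
    (hx : 0 < x) (hy : 0 < y) : 0 < a * x + b * y := by
  rcases ha.eq_or_lt with rfl | ha
  · simpa only [zero_mul, zero_add] using mul_pos (by simpa only [zero_add] using hab) hy
  · positivity

lemma mul_rpow_add_mul_rpow_pos (ha : 0 ≤ a) (hb : 0 ≤ b) (hab : 0 < a + b)
    (hu : 0 < u) (hv : 0 < v) : 0 < a * u ^ γ + b * v ^ γ :=
  mul_add_mul_pos_of_weights ha hb hab (Real.rpow_pos_of_pos hu γ) (Real.rpow_pos_of_pos hv γ)

lemma rpowSum_pos (ha : 0 ≤ a) (hb : 0 ≤ b) (hab : 0 < a + b) (hu : 0 < u) (hv : 0 < v) :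
    0 < rpowSum γ a b u v :=
  Real.rpow_pos_of_pos (mul_rpow_add_mul_rpow_pos ha hb hab hu hv) _

lemma rpowSum_le_rpowSum {u' v' : ℝ} (ha : 0 ≤ a) (hb : 0 ≤ b) (hab : 0 < a + b)
    (hu : 0 < u) (hv : 0 < v) (huu' : u ≤ u') (hvv' : v ≤ v') :
    rpowSum γ a b u v ≤ rpowSum γ a b u' v' := by
  rcases le_total γ 0 with hγ | hγ
  · have hu'u : u' ^ γ ≤ u ^ γ := Real.rpow_le_rpow_of_nonpos hu huu' hγ
    have hv'v : v' ^ γ ≤ v ^ γ := Real.rpow_le_rpow_of_nonpos hv hvv' hγ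
    have hpos := mul_rpow_add_mul_rpow_pos (γ := γ) ha hb hab
      (hu.trans_le huu') (hv.trans_le hvv')
    exact Real.rpow_le_rpow_of_nonpos hpos (by gcongr) (one_div_nonpos.2 hγ)
  · unfold rpowSum
    gcongr

lemma rpowSum_rpow (hγ : γ ≠ 0) (ha : 0 ≤ a) (hb : 0 ≤ b) (hu : 0 ≤ u) (hv : 0 ≤ v) :
    rpowSum γ a b u v ^ γ = a * u ^ γ + b * v ^ γ := by
  rw [rpowSum, one_div, Real.rpow_inv_rpow (by positivity) hγ]

lemma rpowSum_rpowSum_interchange {c d t t₁ t₂ u₁ u₂ v₁ v₂ : ℝ} (hγ : γ ≠ 0)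
    (ha : 0 ≤ a) (hb : 0 ≤ b) (hc : 0 ≤ c) (hd : 0 ≤ d) (ht₁ : 0 ≤ t₁) (ht₂ : 0 ≤ t₂)
    (hu₁ : 0 ≤ u₁) (hu₂ : 0 ≤ u₂) (hv₁ : 0 ≤ v₁) (hv₂ : 0 ≤ v₂)
    (htc : t * c = a * t₁) (htd : t * d = b * t₂) :
    rpowSum γ a b (rpowSum γ 1 t₁ u₁ v₁) (rpowSum γ 1 t₂ u₂ v₂) =
      rpowSum γ 1 t (rpowSum γ a b u₁ u₂) (rpowSum γ c d v₁ v₂) := by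
  rw [rpowSum, rpowSum_rpow hγ zero_le_one ht₁ hu₁ hv₁, rpowSum_rpow hγ zero_le_one ht₂ hu₂ hv₂,
    rpowSum, rpowSum_rpow hγ ha hb hu₁ hu₂, rpowSum_rpow hγ hc hd hv₁ hv₂]
  congr 1
  linear_combination -v₁ ^ γ * htc - v₂ ^ γ * htd

lemma continuousAt_rpowSum (ha : 0 ≤ a) (hb : 0 ≤ b) (hab : 0 < a + b) (hu : 0 < u) (hv : 0 < v) :
    ContinuousAt (fun p : ℝ × ℝ ↦ rpowSum γ a b p.1 p.2) (u, v) :=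
  (((continuousAt_fst.rpow_const (.inl hu.ne')).const_mul a).add
    ((continuousAt_snd.rpow_const (.inl hv.ne')).const_mul b)).rpow_const
      (.inl (mul_rpow_add_mul_rpow_pos ha hb hab hu hv).ne')

lemma rpowSum_le_of_isLUB {C : ℝ} {S T : Set ℝ} (ha : 0 ≤ a) (hb : 0 ≤ b) (hab : 0 < a + b)
    (hS : IsLUB S u) (hT : IsLUB T v) (hu : 0 < u) (hv : 0 < v)
    (hC : ∀ s ∈ S, ∀ r ∈ T, rpowSum γ a b s r ≤ C) : rpowSum γ a b u v ≤ C := by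
  have hmem : (u, v) ∈ closure (S ×ˢ T) := by
    rw [closure_prod_eq]
    exact ⟨hS.mem_closure hS.nonempty, hT.mem_closure hT.nonempty⟩
  exact (continuousAt_rpowSum ha hb hab hu hv).continuousWithinAt.closure_le hmem
    continuousWithinAt_const fun p hp ↦ hC p.1 hp.1 p.2 hp.2

end rpowSum

lemma exists_mem_Icc_mul_eq {a b : ℝ} (ha : 0 ≤ a) (hb : 0 ≤ b) :
    ∃ m ∈ Icc (0 : ℝ) 1, (a + b) * (1 - m) = a ∧ (a + b) * m = b := by
  have hm : (a + b) * (b / (a + b)) = b := mul_div_cancel_of_imp' fun hab ↦ by linarith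
  refine ⟨b / (a + b), ⟨by positivity, div_le_one_of_le₀ (by linarith) (by positivity)⟩, ?_, hm⟩
  linear_combination -hm

section supConvolution

variable {E : Type*} [AddCommGroup E] [Module ℝ E]

/-- `γ`-concavity of a function on a real vector space, a condition on its values at points where
it is positive. -/
def RpowConcave (γ : ℝ) (f : E → ℝ) : Prop :=
  ∀ x y, 0 < f x → 0 < f y → ∀ l ∈ Icc (0 : ℝ) 1,
    rpowSum γ (1 - l) l (f x) (f y) ≤ f ((1 - l) • x + l • y)

/-- The set of values over which the supremum defining the `γ`-supremal convolution of `f` and `g`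
at time `t` and point `z` is taken. -/
def supConvolutionValues (γ : ℝ) (f g : E → ℝ) (t : ℝ) (z : E) : Set ℝ :=
  {v | ∃ x y, z = x + t • y ∧ 0 < f x ∧ 0 < g y ∧ v = rpowSum γ 1 t (f x) (g y)}

/-- The `γ`-supremal convolution `h_t(z)` of `f` and `g`. As a real supremum it is `0` where the
set of values is empty or unbounded. -/
noncomputable def supConvolution (γ : ℝ) (f g : E → ℝ) (t : ℝ) (z : E) : ℝ :=
  sSup (supConvolutionValues γ f g t z)

variable {γ l t t₁ t₂ : ℝ} {f g : E → ℝ} {z z₁ z₂ : E}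

lemma pos_of_mem_supConvolutionValues {v : ℝ} (ht : 0 ≤ t)
    (hv : v ∈ supConvolutionValues γ f g t z) : 0 < v := by
  obtain ⟨x, y, -, hx, hy, rfl⟩ := hv
  exact rpowSum_pos zero_le_one ht (by positivity) hx hy

lemma bddAbove_supConvolutionValues (ht : 0 ≤ t) (hf : ∃ M, ∀ x, f x ≤ M)
    (hg : ∃ N, ∀ x, g x ≤ N) : BddAbove (supConvolutionValues γ f g t z) := by
  obtain ⟨M, hM⟩ := hf
  obtain ⟨N, hN⟩ := hg
  refine ⟨rpowSum γ 1 t M N, ?_⟩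
  rintro _ ⟨x, y, -, hx, hy, rfl⟩
  exact rpowSum_le_rpowSum zero_le_one ht (by positivity) hx hy (hM x) (hN y)

lemma supConvolution_pos (ht : 0 ≤ t) (hne : (supConvolutionValues γ f g t z).Nonempty)
    (hbdd : BddAbove (supConvolutionValues γ f g t z)) : 0 < supConvolution γ f g t z :=
  let ⟨_, hv⟩ := hne
  (pos_of_mem_supConvolutionValues ht hv).trans_le (le_csSup hbdd hv)

lemma exists_mem_supConvolutionValues_rpowSum_le {v₁ v₂ : ℝ} (hγ : γ ≠ 0)
    (hf : RpowConcave γ f) (hg : RpowConcave γ g) (ht₁ : 0 ≤ t₁) (ht₂ : 0 ≤ t₂)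
    (hl : l ∈ Icc (0 : ℝ) 1) (hv₁ : v₁ ∈ supConvolutionValues γ f g t₁ z₁)
    (hv₂ : v₂ ∈ supConvolutionValues γ f g t₂ z₂) :
    ∃ v ∈ supConvolutionValues γ f g ((1 - l) * t₁ + l * t₂) ((1 - l) • z₁ + l • z₂),
      rpowSum γ (1 - l) l v₁ v₂ ≤ v := by
  obtain ⟨x₁, w₁, rfl, hx₁, hw₁, rfl⟩ := hv₁
  obtain ⟨x₂, w₂, rfl, hx₂, hw₂, rfl⟩ := hv₂
  have hl' : 0 ≤ 1 - l := sub_nonneg.2 hl.2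
  have ht : 0 ≤ (1 - l) * t₁ + l * t₂ :=
    add_nonneg (mul_nonneg hl' ht₁) (mul_nonneg hl.1 ht₂)
  obtain ⟨m, hm, htm', htm⟩ := exists_mem_Icc_mul_eq (mul_nonneg hl' ht₁) (mul_nonneg hl.1 ht₂)
  have hm' : 0 ≤ 1 - m := sub_nonneg.2 hm.2
  set t := (1 - l) * t₁ + l * t₂
  have hpos_f : 0 < rpowSum γ (1 - l) l (f x₁) (f x₂) :=
    rpowSum_pos hl' hl.1 (by linarith) hx₁ hx₂
  have hpos_g : 0 < rpowSum γ (1 - m) m (g w₁) (g w₂) :=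
    rpowSum_pos hm' hm.1 (by linarith) hw₁ hw₂
  have hf_le := hf x₁ x₂ hx₁ hx₂ l hl
  have hg_le := hg w₁ w₂ hw₁ hw₂ m hm
  have hsplit : (1 - l) • (x₁ + t₁ • w₁) + l • (x₂ + t₂ • w₂) =
      ((1 - l) • x₁ + l • x₂) + t • ((1 - m) • w₁ + m • w₂) := by
    rw [smul_add t, smul_smul t, smul_smul t, htm', htm]
    module
  refine ⟨_, ⟨_, _, hsplit, hpos_f.trans_le hf_le, hpos_g.trans_le hg_le, rfl⟩, ?_⟩
  rw [rpowSum_rpowSum_interchange hγ hl' hl.1 hm' hm.1 ht₁ ht₂ hx₁.le hx₂.le hw₁.le hw₂.le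
    htm' htm]
  exact rpowSum_le_rpowSum zero_le_one ht (by positivity) hpos_f hpos_g hf_le hg_le

theorem hopf_lax_pointwise_concave_general (hγ : γ ≠ 0) (hf : RpowConcave γ f)
    (hg : RpowConcave γ g)
    (hbdd : ∀ t z, 0 ≤ t → BddAbove (supConvolutionValues γ f g t z))
    (ht₁ : 0 ≤ t₁) (ht₂ : 0 ≤ t₂) (hl : l ∈ Icc (0 : ℝ) 1)
    (hne₁ : (supConvolutionValues γ f g t₁ z₁).Nonempty)
    (hne₂ : (supConvolutionValues γ f g t₂ z₂).Nonempty) :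
    rpowSum γ (1 - l) l (supConvolution γ f g t₁ z₁) (supConvolution γ f g t₂ z₂) ≤
      supConvolution γ f g ((1 - l) * t₁ + l * t₂) ((1 - l) • z₁ + l • z₂) := by
  have hl' : 0 ≤ 1 - l := sub_nonneg.2 hl.2
  have ht : 0 ≤ (1 - l) * t₁ + l * t₂ :=
    add_nonneg (mul_nonneg hl' ht₁) (mul_nonneg hl.1 ht₂)
  have hb₁ := hbdd t₁ z₁ ht₁
  have hb₂ := hbdd t₂ z₂ ht₂
  refine rpowSum_le_of_isLUB hl' hl.1 (by linarith) (isLUB_csSup hne₁ hb₁)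
    (isLUB_csSup hne₂ hb₂) (supConvolution_pos ht₁ hne₁ hb₁)
    (supConvolution_pos ht₂ hne₂ hb₂) fun v₁ hv₁ v₂ hv₂ ↦ ?_
  obtain ⟨v, hv, hle⟩ :=
    exists_mem_supConvolutionValues_rpowSum_le hγ hf hg ht₁ ht₂ hl hv₁ hv₂
  exact hle.trans (le_csSup (hbdd _ _ ht) hv)

end supConvolution

/-- Pointwise joint concavity in (t, y) of the γ-supremal convolution h_t of
two γ-concave functions. -/
theorem hopf_lax_pointwise_concave
    (n : ℕ) (hn : 1 ≤ n) (γ : ℝ) (hγ0 : γ ≠ 0)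
    (f g : EuclideanSpace ℝ (Fin n) → ℝ)
    (hf0 : ∀ x, 0 ≤ f x) (hg0 : ∀ x, 0 ≤ g x)
    (hfb : ∃ M, ∀ x, f x ≤ M) (hgb : ∃ M, ∀ x, g x ≤ M)
    (hfconc : ∀ x y, 0 < f x * f y → ∀ l ∈ Icc (0 : ℝ) 1,
      ((1 - l) * f x ^ γ + l * f y ^ γ) ^ (1 / γ) ≤ f ((1 - l) • x + l • y))
    (hgconc : ∀ x y, 0 < g x * g y → ∀ l ∈ Icc (0 : ℝ) 1,
      ((1 - l) * g x ^ γ + l * g y ^ γ) ^ (1 / γ) ≤ g ((1 - l) • x + l • y))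
    (h : ℝ → EuclideanSpace ℝ (Fin n) → ℝ)
    (hh : ∀ t z, h t z = sSup {v : ℝ | ∃ x y, z = x + t • y ∧ 0 < f x ∧ 0 < g y ∧
      v = (f x ^ γ + t * g y ^ γ) ^ (1 / γ)}) :
    ∀ t₁ t₂ : ℝ, 0 < t₁ → 0 < t₂ → ∀ l ∈ Icc (0 : ℝ) 1,
      ∀ y₁ y₂ : EuclideanSpace ℝ (Fin n),
        (∃ x y, y₁ = x + t₁ • y ∧ 0 < f x ∧ 0 < g y) →
        (∃ x y, y₂ = x + t₂ • y ∧ 0 < f x ∧ 0 < g y) →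
        ((1 - l) * h t₁ y₁ ^ γ + l * h t₂ y₂ ^ γ) ^ (1 / γ)
          ≤ h ((1 - l) * t₁ + l * t₂) ((1 - l) • y₁ + l • y₂) := by
  rintro t₁ t₂ ht₁ ht₂ l hl y₁ y₂ ⟨x₁, w₁, hz₁, hx₁, hw₁⟩ ⟨x₂, w₂, hz₂, hx₂, hw₂⟩
  simpa only [hh, supConvolution, supConvolutionValues, rpowSum, one_mul] using
    hopf_lax_pointwise_concave_general hγ0 (fun x y hx hy ↦ hfconc x y (mul_pos hx hy))
      (fun x y hx hy ↦ hgconc x y (mul_pos hx hy))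
      (fun _ _ ht ↦ bddAbove_supConvolutionValues ht hfb hgb) ht₁.le ht₂.le hl
      ⟨_, x₁, w₁, hz₁, hx₁, hw₁, rfl⟩ ⟨_, x₂, w₂, hz₂, hx₂, hw₂, rfl⟩
end

section
/- Work in Euclidean space ℝ² and let A = {(0,0), (3,0)} ∪ ([1,2] × {1}) ⊆ ℝ². For t ≥ 0 let f(t) be the one-dimensional Lebesgue measure of the set {x ∈ [0,3] : (x,0) ∈ A + t·B₂²}, where B₂² is the closed Euclidean unit ball. Then f(t) = 2t for all t ∈ [0,1), while f(1) = 3; in particular f is not continuous at t = 1. -/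
open MeasureTheory Set Pointwise

/-!
A point at height `h` above a line meets that line, after thickening by `t`, only when `t ≥ |h|`,
and then in an interval of radius `√(t² - h²)`. Hence the part of `A` at height `1` contributes
nothing to the section for `t < 1`, while at `t = 1` its whole orthogonal projection `[1, 2]`
appears at once and fills the gap left by the intervals around `0` and `3`.
-/

section ParallelSet

open Metric

/-- The parallel set `A + t B` of a set `A` at distance `t`, where `B` is the closed unit ball. It
is defined as a Minkowski sum, so that `t < 0` gives the same set as `-t`. -/
def parallelSet {E : Type*} [NormedAddCommGroup E] [NormedSpace ℝ E] (A : Set E) (t : ℝ) :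
    Set E :=
  A + t • closedBall (0 : E) 1

variable {E : Type*} [NormedAddCommGroup E] [NormedSpace ℝ E]

theorem parallelSet_union (A B : Set E) (t : ℝ) :
    parallelSet (A ∪ B) t = parallelSet A t ∪ parallelSet B t :=
  union_add

theorem mem_parallelSet {A : Set E} {t : ℝ} (ht : 0 ≤ t) {p : E} :
    p ∈ parallelSet A t ↔ ∃ a ∈ A, p ∈ closedBall a t := by
  rw [parallelSet, smul_unitClosedBall_of_nonneg ht, ← vadd_eq_add, ← iUnion_vadd_set]
  simp only [vadd_closedBall, vadd_eq_add, add_zero, mem_iUnion, exists_prop]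

theorem parallelSet_zero (A : Set E) : parallelSet A 0 = A := by
  ext p
  simp [mem_parallelSet le_rfl]

theorem Icc_inter_parallelSet_pair {a b t : ℝ} (ht : 0 ≤ t) :
    Icc a b ∩ parallelSet {a, b} t = Icc a b \ Ioo (a + t) (b - t) := by
  ext x
  simp only [mem_inter_iff, mem_sdiff, and_congr_right_iff, mem_parallelSet ht, mem_insert_iff,
    mem_singleton_iff, exists_eq_or_imp, exists_eq_left, Real.closedBall_eq_Icc, mem_Icc, mem_Ioo]
  grind

theorem volume_real_Icc_inter_parallelSet_pair {a b t : ℝ} (ht : 0 ≤ t) (hab : 2 * t ≤ b - a) :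
    volume.real (Icc a b ∩ parallelSet {a, b} t) = 2 * t := by
  have hgap : Ioo (a + t) (b - t) ⊆ Icc a b :=
    Ioo_subset_Icc_self.trans (Icc_subset_Icc (by linarith) (by linarith))
  rw [Icc_inter_parallelSet_pair ht, measureReal_sdiff hgap measurableSet_Ioo measure_Icc_lt_top.ne,
    Real.volume_real_Icc_of_le (by linarith), Real.volume_real_Ioo_of_le (by linarith)]
  ring

theorem Icc_subset_parallelSet_pair_union_Icc {a b t : ℝ} (ht : 0 ≤ t) :
    Icc a b ⊆ parallelSet {a, b} t ∪ Icc (a + t) (b - t) := by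
  intro x hx
  by_cases hgap : x ∈ Ioo (a + t) (b - t)
  · exact Or.inr (Ioo_subset_Icc_self hgap)
  · exact Or.inl ((Icc_inter_parallelSet_pair ht).superset ⟨hx, hgap⟩).2

end ParallelSet

section HorizontalLine

open Metric

/-- The parametrization `x ↦ (x, y)` of the horizontal line at height `y` in the Euclidean plane.
Images under it are copies `S × {y}` of sets of reals, preimages are horizontal sections. -/
def horizontalLine (y x : ℝ) : EuclideanSpace ℝ (Fin 2) := !₂[x, y]

variable {t u v x y : ℝ}

theorem horizontalLine_mem_closedBall_iff (ht : 0 ≤ t) :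
    horizontalLine y x ∈ closedBall (horizontalLine v u) t ↔
      (x - u) ^ 2 + (y - v) ^ 2 ≤ t ^ 2 := by
  rw [mem_closedBall, EuclideanSpace.dist_eq, Real.sqrt_le_left ht]
  simp [horizontalLine, Real.dist_eq]

theorem horizontalLine_mem_closedBall_iff_of_le (h : |y - v| ≤ t) :
    horizontalLine y x ∈ closedBall (horizontalLine v u) t ↔
      x ∈ closedBall u √(t ^ 2 - (y - v) ^ 2) := by
  have hsq : 0 ≤ t ^ 2 - (y - v) ^ 2 := sub_nonneg.2 (sq_le_sq' (abs_le.1 h).1 (abs_le.1 h).2)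
  rw [horizontalLine_mem_closedBall_iff ((abs_nonneg _).trans h), mem_closedBall, Real.dist_eq,
    ← le_sub_iff_add_le, Real.le_sqrt (abs_nonneg _) hsq, sq_abs]

theorem horizontalLine_preimage_parallelSet_image_of_le (S : Set ℝ) (h : |y - v| ≤ t) :
    horizontalLine y ⁻¹' parallelSet (horizontalLine v '' S) t =
      parallelSet S √(t ^ 2 - (y - v) ^ 2) := by
  ext x
  simp only [mem_preimage, mem_parallelSet ((abs_nonneg _).trans h),
    mem_parallelSet (Real.sqrt_nonneg _), exists_mem_image,
    horizontalLine_mem_closedBall_iff_of_le h]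

theorem horizontalLine_preimage_parallelSet_image_of_lt (S : Set ℝ) (ht : 0 ≤ t)
    (h : t < |y - v|) :
    horizontalLine y ⁻¹' parallelSet (horizontalLine v '' S) t = ∅ := by
  have hsq : t ^ 2 < (y - v) ^ 2 := sq_lt_sq.2 (by rwa [abs_of_nonneg ht])
  refine eq_empty_of_forall_notMem fun x hx => ?_
  obtain ⟨_, ⟨u, -, rfl⟩, hu⟩ := (mem_parallelSet ht).1 hx
  linarith [(horizontalLine_mem_closedBall_iff ht).1 hu, sq_nonneg (x - u)]

theorem horizontalLine_preimage_parallelSet_image_self (S : Set ℝ) (ht : 0 ≤ t) :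
    horizontalLine y ⁻¹' parallelSet (horizontalLine y '' S) t = parallelSet S t := by
  simpa [ht] using
    horizontalLine_preimage_parallelSet_image_of_le (y := y) (v := y) (t := t) S (by simpa)

theorem horizontalLine_preimage_parallelSet_image_abs_sub (S : Set ℝ) :
    horizontalLine y ⁻¹' parallelSet (horizontalLine v '' S) |y - v| = S := by
  rw [horizontalLine_preimage_parallelSet_image_of_le S le_rfl, sq_abs, sub_self, Real.sqrt_zero,
    parallelSet_zero]

theorem horizontalLine_preimage_parallelSet_union_of_lt (S T : Set ℝ) (ht : 0 ≤ t)
    (h : t < |y - v|) :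
    horizontalLine y ⁻¹' parallelSet (horizontalLine y '' S ∪ horizontalLine v '' T) t =
      parallelSet S t := by
  rw [parallelSet_union, preimage_union, horizontalLine_preimage_parallelSet_image_self S ht,
    horizontalLine_preimage_parallelSet_image_of_lt T ht h, union_empty]

theorem horizontalLine_preimage_parallelSet_union_abs_sub (S T : Set ℝ) :
    horizontalLine y ⁻¹' parallelSet (horizontalLine y '' S ∪ horizontalLine v '' T) |y - v| =
      parallelSet S |y - v| ∪ T := by
  rw [parallelSet_union, preimage_union,
    horizontalLine_preimage_parallelSet_image_self S (abs_nonneg _),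
    horizontalLine_preimage_parallelSet_image_abs_sub]

end HorizontalLine

/-- The one-dimensional measure of the intersection of the parallel set of
`A = {(0,0),(3,0)} ∪ [1,2]×{1}` with the segment `[0,3]×{0}` is `2t` for
`t ∈ [0,1)` but jumps to `3` at `t = 1`; in particular it is discontinuous. -/
theorem parallel_set_section_discontinuous
    (pt : ℝ → ℝ → EuclideanSpace ℝ (Fin 2))
    (hpt : ∀ x y, pt x y = (WithLp.equiv 2 (Fin 2 → ℝ)).symm ![x, y])
    (A : Set (EuclideanSpace ℝ (Fin 2)))
    (hA : A = {pt 0 0, pt 3 0} ∪ (fun x => pt x 1) '' Icc (1 : ℝ) 2)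
    (f : ℝ → ℝ)
    (hf : ∀ t, f t = (volume {x ∈ Icc (0 : ℝ) 3 |
      pt x 0 ∈ A + t • Metric.closedBall (0 : EuclideanSpace ℝ (Fin 2)) 1}).toReal) :
    (∀ t ∈ Ico (0 : ℝ) 1, f t = 2 * t) ∧ f 1 = 3 ∧ ¬ ContinuousAt f 1 := by
  obtain rfl : pt = fun x y => horizontalLine y x := funext₂ hpt
  replace hA : A = horizontalLine 0 '' {0, 3} ∪ horizontalLine 1 '' Icc 1 2 := by
    rw [hA, image_pair]
  replace hf : ∀ t, f t = volume.real (Icc 0 3 ∩ horizontalLine 0 ⁻¹' parallelSet A t) := hf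
  have eq_two_mul : ∀ t ∈ Ico (0 : ℝ) 1, f t = 2 * t := fun t ⟨ht0, ht1⟩ => by
    rw [hf, hA, horizontalLine_preimage_parallelSet_union_of_lt _ _ ht0 (by simpa),
      volume_real_Icc_inter_parallelSet_pair ht0 (by linarith)]
  have eq_three : f 1 = 3 := by
    have hsection : horizontalLine 0 ⁻¹' parallelSet A 1 = parallelSet {0, 3} 1 ∪ Icc 1 2 := by
      simpa [hA] using
        horizontalLine_preimage_parallelSet_union_abs_sub (y := 0) (v := 1) {0, 3} (Icc 1 2)
    have hcover : Icc (0 : ℝ) 3 ⊆ parallelSet {0, 3} 1 ∪ Icc 1 2 := by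
      convert Icc_subset_parallelSet_pair_union_Icc (zero_le_one' ℝ) using 3 <;> norm_num
    rw [hf, hsection, inter_eq_left.2 hcover, Real.volume_real_Icc_of_le (by norm_num), sub_zero]
  refine ⟨eq_two_mul, eq_three, fun hcont => ?_⟩
  have tendsto_two : Filter.Tendsto f (nhdsWithin 1 (Iio 1)) (nhds (2 * 1)) :=
    ((continuous_const_mul 2).tendsto 1).mono_left nhdsWithin_le_nhds |>.congr' <|
      Filter.mem_of_superset (Ico_mem_nhdsLT zero_lt_one) fun t ht => (eq_two_mul t ht).symm
  linarith [tendsto_nhds_unique tendsto_two (hcont.tendsto.mono_left nhdsWithin_le_nhds)]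
end
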